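/- arXiv:1003.0625 — 6 statements merged into one kernel-verified Lean document; each statement's English description precedes it below -/
import Mathlib

section
/- Let N ∈ {3,4,5} and ℓ ∈ (−1,1). Then for every t ∈ ℝ, ∫_{ℝ^N}|∇_x W_ℓ(t,x)|² dx + ((N−2)/2)·∫_{ℝ^N}(∂_t W_ℓ(t,x))² dx ≥ (1 + ℓ⁴/8)·∫_{ℝ^N}|∇W|² dx. -/
open MeasureTheory Metric Filter Set

noncomputable section

/-- The ground state `W(x) = (1 + |x|²/(N(N-2)))^(-(N-2)/2)`. -/
def W (N : ℕ) (x : EuclideanSpace ℝ (Fin N)) : ℝ :=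
  (1 + ‖x‖ ^ 2 / ((N : ℝ) * ((N : ℝ) - 2))) ^ (-(((N : ℝ) - 2) / 2))

/-- The energy `E(v₀,v₁)`. -/
def energy (N : ℕ) (v₀ v₁ : EuclideanSpace ℝ (Fin N) → ℝ) : ℝ :=
  (1 / 2) * (∫ x, v₁ x ^ 2)
    + (1 / 2) * (∫ x, ‖gradient v₀ x‖ ^ 2)
    - ((N : ℝ) - 2) / (2 * (N : ℝ)) * (∫ x, |v₀ x| ^ (2 * (N : ℝ) / ((N : ℝ) - 2)))

/-- The first coordinate of a point of `ℝ^N`. -/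
def firstCoord {N : ℕ} (x : EuclideanSpace ℝ (Fin N)) : ℝ :=
  if h : 0 < N then x ⟨0, h⟩ else 0

/-- The Lorentz-transformed ground state `W_ℓ(t,x)`; the sum `x₂² + ⋯ + x_N²` is written
as `‖x‖² - x₁²`. -/
def Wl (N : ℕ) (ℓ : ℝ) (t : ℝ) (x : EuclideanSpace ℝ (Fin N)) : ℝ :=
  (1 + (firstCoord x - t * ℓ) ^ 2 / ((N : ℝ) * ((N : ℝ) - 2) * (1 - ℓ ^ 2))
     + (‖x‖ ^ 2 - firstCoord x ^ 2) / ((N : ℝ) * ((N : ℝ) - 2))) ^ (-(((N : ℝ) - 2) / 2))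

/-- The time derivative `∂ₜ W_ℓ(t,x)`. -/
def dtWl (N : ℕ) (ℓ : ℝ) (t : ℝ) (x : EuclideanSpace ℝ (Fin N)) : ℝ :=
  deriv (fun s => Wl N ℓ s x) t

/-- The second partial derivative `∂²f/∂xⱼ²` at `x`. -/
def d2 {N : ℕ} (f : EuclideanSpace ℝ (Fin N) → ℝ) (j : Fin N)
    (x : EuclideanSpace ℝ (Fin N)) : ℝ :=
  fderiv ℝ (fun y => fderiv ℝ f y (EuclideanSpace.single j 1)) x (EuclideanSpace.single j 1)

/-- Radial profile of the gradient. -/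
def Phi (N : ℕ) (x : EuclideanSpace ℝ (Fin N)) : ℝ :=
  (1 / (N : ℝ)) * (1 + ‖x‖ ^ 2 / ((N : ℝ) * ((N : ℝ) - 2))) ^ (-(((N : ℝ) - 2) / 2) - 1)

/-- Diagonal scaling. -/
def Ld (N : ℕ) (d : Fin N → ℝ) : EuclideanSpace ℝ (Fin N) →ₗ[ℝ] EuclideanSpace ℝ (Fin N) :=
  Matrix.toEuclideanLin (Matrix.diagonal d)

lemma Ld_apply (N : ℕ) (d : Fin N → ℝ) (x : EuclideanSpace ℝ (Fin N)) (i : Fin N) :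
    Ld N d x i = d i * x i := by
  simp [Ld, Matrix.toEuclideanLin, Matrix.mulVec_diagonal]

lemma Ld_det (N : ℕ) (d : Fin N → ℝ) : LinearMap.det (Ld N d) = ∏ i, d i := by
  rw [Ld, Matrix.toEuclideanLin_eq_toLin, LinearMap.det_toLin, Matrix.det_diagonal]

lemma Ld_adj (N : ℕ) (d : Fin N → ℝ) (x y : EuclideanSpace ℝ (Fin N)) :
    inner ℝ x (Ld N d y) = inner ℝ (Ld N d x) y := by
  simp only [PiLp.inner_apply, Ld_apply]
  refine Finset.sum_congr rfl fun i _ => ?_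
  simp; ring

lemma base_pos (N : ℕ) (h3 : 3 ≤ N) (x : EuclideanSpace ℝ (Fin N)) :
    0 < 1 + ‖x‖ ^ 2 / ((N : ℝ) * ((N : ℝ) - 2)) := by
  have : (3 : ℝ) ≤ N := by exact_mod_cast h3
  have : 0 < (N : ℝ) * ((N : ℝ) - 2) := by apply mul_pos <;> linarith
  positivity

lemma W_hasGradientAt (N : ℕ) (h3 : 3 ≤ N) (x : EuclideanSpace ℝ (Fin N)) :
    HasFDerivAt (W N) (innerSL ℝ (-(Phi N x) • x)) x := by
  have h3' : (3 : ℝ) ≤ N := by exact_mod_cast h3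
  have h2 : (N : ℝ) - 2 ≠ 0 := by linarith
  have h0 : (N : ℝ) ≠ 0 := by linarith
  have h := (((hasStrictFDerivAt_norm_sq x).hasFDerivAt.mul_const
    (((N : ℝ) * ((N : ℝ) - 2))⁻¹)).const_add 1).rpow_const
    (p := -(((N : ℝ) - 2) / 2)) (Or.inl (by
      have := base_pos N h3 x; rw [div_eq_mul_inv] at this; exact this.ne'))
  simp only [← div_eq_mul_inv] at h
  refine HasFDerivAt.congr_fderiv h ?_
  ext v
  simp [Phi]
  field_simp

lemma comp_hasFDerivAt (N : ℕ) (h3 : 3 ≤ N) (d : Fin N → ℝ) (a x : EuclideanSpace ℝ (Fin N)) :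
    HasGradientAt (fun x => W N (Ld N d (x - a)))
      (-(Phi N (Ld N d (x - a))) • Ld N d (Ld N d (x - a))) x := by
  have h1 : HasFDerivAt (fun x => Ld N d (x - a)) (LinearMap.toContinuousLinearMap (Ld N d)) x := by
    have := (LinearMap.toContinuousLinearMap (Ld N d)).hasFDerivAt.comp x
      ((hasFDerivAt_id (𝕜 := ℝ) x).sub_const a)
    rw [ContinuousLinearMap.comp_id] at this
    exact this
  have h2 := (W_hasGradientAt N h3 (Ld N d (x - a))).comp x h1
  rw [hasGradientAt_iff_hasFDerivAt]
  refine HasFDerivAt.congr_fderiv h2 ?_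
  ext v
  simp only [ContinuousLinearMap.comp_apply, innerSL_apply_apply,
    LinearMap.coe_toContinuousLinearMap', InnerProductSpace.toDual_apply_apply, inner_smul_left,
    Ld_adj]

/-- Squared partial derivatives. -/
def F (N : ℕ) (i : Fin N) (x : EuclideanSpace ℝ (Fin N)) : ℝ := (Phi N x) ^ 2 * (x i) ^ 2

lemma norm_grad (N : ℕ) (h3 : 3 ≤ N) (d : Fin N → ℝ) (a x : EuclideanSpace ℝ (Fin N)) :
    ‖gradient (fun x => W N (Ld N d (x - a))) x‖ ^ 2
      = ∑ i, d i ^ 2 * F N i (Ld N d (x - a)) := by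
  rw [(comp_hasFDerivAt N h3 d a x).gradient, norm_smul, mul_pow, EuclideanSpace.norm_sq_eq,
    Finset.mul_sum]
  refine Finset.sum_congr rfl fun i _ => ?_
  rw [Ld_apply]
  simp [F, mul_pow]
  ring

lemma norm_grad_W (N : ℕ) (h3 : 3 ≤ N) (x : EuclideanSpace ℝ (Fin N)) :
    ‖gradient (W N) x‖ ^ 2 = ∑ i, F N i x := by
  have hL : ∀ y, Ld N (fun _ => 1) y = y := by intro y; ext i; simp [Ld_apply]
  have := norm_grad N h3 (fun _ => 1) 0 x
  simp only [hL, sub_zero] at this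
  simpa using this

lemma F_swap (N : ℕ) (i j : Fin N) : ∫ x, F N i x = ∫ x, F N j x := by
  let e : EuclideanSpace ℝ (Fin N) ≃ₗᵢ[ℝ] EuclideanSpace ℝ (Fin N) :=
    LinearIsometryEquiv.piLpCongrLeft 2 ℝ ℝ (Equiv.swap i j)
  have h := e.measurePreserving.integral_comp e.toHomeomorph.measurableEmbedding (F N j)
  rw [← h]
  congr 1; ext x
  simp [F, Phi, e]

lemma F_cont (N : ℕ) (h3 : 3 ≤ N) (i : Fin N) : Continuous (F N i) := by
  unfold F Phi
  have : Continuous fun x : EuclideanSpace ℝ (Fin N) =>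
    (1 + ‖x‖ ^ 2 / ((N : ℝ) * ((N : ℝ) - 2))) ^ (-(((N : ℝ) - 2) / 2) - 1) :=
    Continuous.rpow_const (by fun_prop) (fun x => Or.inl (base_pos N h3 x).ne')
  fun_prop

lemma int_comp (N : ℕ) (d : Fin N → ℝ) (hd : ∏ i, d i ≠ 0) (a : EuclideanSpace ℝ (Fin N))
    (g : EuclideanSpace ℝ (Fin N) → ℝ) :
    ∫ x, g (Ld N d (x - a)) = |(∏ i, d i)⁻¹| * ∫ x, g x := by
  rw [integral_sub_right_eq_self (fun x => g (Ld N d x)) a]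
  have hd' : LinearMap.det (Ld N d) ≠ 0 := by rwa [Ld_det]
  have hm := Measure.map_linearMap_addHaar_eq_smul_addHaar
    (volume : Measure (EuclideanSpace ℝ (Fin N))) hd'
  have he : MeasurableEmbedding (Ld N d) :=
    (LinearEquiv.toContinuousLinearEquiv
      (LinearMap.equivOfDetNeZero (Ld N d) hd')).toHomeomorph.measurableEmbedding
  rw [← he.integral_map, hm, integral_smul_measure, Ld_det]
  simp

/-- scaling vector -/
def dv (N : ℕ) (i0 : Fin N) (s : ℝ) : Fin N → ℝ := fun i => if i = i0 then 1 / s else 1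

lemma Wl_eq (N : ℕ) (h3 : 3 ≤ N) (ℓ s t : ℝ) (hs : 0 < s) (hs2 : s ^ 2 = 1 - ℓ ^ 2)
    (x : EuclideanSpace ℝ (Fin N)) :
    Wl N ℓ t x = W N (Ld N (dv N ⟨0, by omega⟩ s)
      (x - EuclideanSpace.single ⟨0, by omega⟩ (t * ℓ))) := by
  have h3' : (3 : ℝ) ≤ N := by exact_mod_cast h3
  have h2 : (N : ℝ) - 2 ≠ 0 := by linarith
  have h0 : (N : ℝ) ≠ 0 := by linarith
  have hpos : 0 < N := by omega
  unfold Wl W firstCoord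
  rw [dif_pos hpos, ← hs2]
  congr 1
  rw [EuclideanSpace.norm_sq_eq, EuclideanSpace.norm_sq_eq]
  have hs0 := hs.ne'
  rw [← Finset.add_sum_erase _ _ (Finset.mem_univ (⟨0, hpos⟩ : Fin N)),
    ← Finset.add_sum_erase _ _ (Finset.mem_univ (⟨0, hpos⟩ : Fin N))]
  have : ∑ i ∈ Finset.univ.erase (⟨0, hpos⟩ : Fin N),
      ‖Ld N (dv N ⟨0, hpos⟩ s) (x - EuclideanSpace.single ⟨0, hpos⟩ (t * ℓ)) i‖ ^ 2
      = ∑ i ∈ Finset.univ.erase (⟨0, hpos⟩ : Fin N), ‖x i‖ ^ 2 := by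
    refine Finset.sum_congr rfl fun i hi => ?_
    have := Finset.ne_of_mem_erase hi
    rw [Ld_apply]
    simp [dv, this]
  rw [this, Ld_apply]
  simp only [dv, Real.norm_eq_abs, sq_abs, if_true, PiLp.sub_apply, EuclideanSpace.single_apply]
  field_simp
  ring

lemma dtWl_eq (N : ℕ) (h3 : 3 ≤ N) (ℓ s t : ℝ) (hs : 0 < s) (hs2 : s ^ 2 = 1 - ℓ ^ 2)
    (x : EuclideanSpace ℝ (Fin N)) :
    dtWl N ℓ t x ^ 2 = (ℓ ^ 2 / s ^ 2) * F N ⟨0, by omega⟩ (Ld N (dv N ⟨0, by omega⟩ s)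
      (x - EuclideanSpace.single ⟨0, by omega⟩ (t * ℓ))) := by
  have hpos : 0 < N := by omega
  unfold dtWl
  rw [show (fun r => Wl N ℓ r x) = fun r => W N (Ld N (dv N ⟨0, hpos⟩ s)
      (x - EuclideanSpace.single ⟨0, hpos⟩ (r * ℓ))) from
      funext fun r => Wl_eq N h3 ℓ s r hs hs2 x]
  set i0 : Fin N := ⟨0, hpos⟩
  set L := LinearMap.toContinuousLinearMap (Ld N (dv N i0 s)) with hL
  have h1 : HasDerivAt (fun r : ℝ => x - EuclideanSpace.single i0 (r * ℓ))
      (-(ℓ • EuclideanSpace.single i0 (1 : ℝ))) t := by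
    have e : ∀ r : ℝ, EuclideanSpace.single i0 (r * ℓ)
        = (r * ℓ) • EuclideanSpace.single i0 (1 : ℝ) := by
      intro r; ext i; simp [EuclideanSpace.single_apply]
    simp only [e]
    have := (((hasDerivAt_id t).mul_const ℓ).smul_const
      (EuclideanSpace.single i0 (1 : ℝ))).const_sub x
    simpa using this
  have h2 := L.hasFDerivAt.comp_hasDerivAt t h1
  have h3 := (W_hasGradientAt N h3 (L (x - EuclideanSpace.single i0 (t * ℓ)))).comp_hasDerivAt t h2
  have h4 := h3.deriv
  have h5 : deriv (fun r => W N (Ld N (dv N i0 s)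
      (x - EuclideanSpace.single i0 (r * ℓ)))) t = _ := h4
  rw [h5]
  set y := Ld N (dv N i0 s) (x - EuclideanSpace.single i0 (t * ℓ)) with hy
  have h6 : L (x - EuclideanSpace.single i0 (t * ℓ)) = y := rfl
  rw [h6]
  have h7 : L (-(ℓ • EuclideanSpace.single i0 (1 : ℝ)))
      = EuclideanSpace.single i0 (-ℓ / s) := by
    ext i
    change Ld N (dv N i0 s) _ i = _
    rw [Ld_apply]
    by_cases h : i = i0
    · subst h; simp [dv]; ring
    · simp [dv, h]
  rw [h7, innerSL_apply_apply, EuclideanSpace.inner_single_right]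
  simp [F]
  ring

lemma num_ineq (u s : ℝ) (hu : 0 ≤ u) (hs : 0 < s) (hs2 : s ^ 2 = 1 - u) :
    (1 + u ^ 2 / 8) * s ≤ 1 - u / 2 := by
  have h1 : u ≤ 1 := by nlinarith
  refine (fun h h' => (sq_le_sq₀ (by positivity) h').1 h : (((1 + u ^ 2 / 8) * s) ^ 2 ≤ (1 - u / 2) ^ 2) → 0 ≤ 1 - u / 2 → _) ?_ (by linarith)
  have : ((1 + u ^ 2 / 8) * s) ^ 2 = (1 + u ^ 2 / 8) ^ 2 * (1 - u) := by rw [mul_pow, hs2]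
  rw [this]
  have h3 : 0 ≤ u ^ 3 := by positivity
  have h5 : 0 ≤ u ^ 3 * u ^ 2 := by positivity
  nlinarith [mul_nonneg h3 (sub_nonneg.2 h1)]

/-- Claim 2.3, second line: lower bound for the energy-norm of the solitary wave `W_ℓ`. -/
theorem stmt3 (N : ℕ) (hN : N = 3 ∨ N = 4 ∨ N = 5)
    (ℓ : ℝ) (hℓ : ℓ ∈ Set.Ioo (-1 : ℝ) 1) (t : ℝ) :
    (1 + ℓ ^ 4 / 8) * (∫ x, ‖gradient (W N) x‖ ^ 2)
      ≤ (∫ x, ‖gradient (Wl N ℓ t) x‖ ^ 2)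
          + ((N : ℝ) - 2) / 2 * (∫ x, dtWl N ℓ t x ^ 2) := by
  have h3 : 3 ≤ N := by omega
  have h3' : (3 : ℝ) ≤ N := by exact_mod_cast h3
  have hpos : 0 < N := by omega
  by_cases hint : Integrable (fun x => ‖gradient (W N) x‖ ^ 2)
  swap
  · rw [integral_undef hint, mul_zero]
    have : 0 ≤ ((N : ℝ) - 2) / 2 := by linarith
    have h1 : 0 ≤ ∫ x, ‖gradient (Wl N ℓ t) x‖ ^ 2 := integral_nonneg fun x => by positivity
    have h2 : 0 ≤ ∫ x, dtWl N ℓ t x ^ 2 := integral_nonneg fun x => by positivity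
    positivity
  have hl : 0 < 1 - ℓ ^ 2 := by nlinarith [hℓ.1, hℓ.2]
  obtain ⟨s, hs, hs2⟩ : ∃ s : ℝ, 0 < s ∧ s ^ 2 = 1 - ℓ ^ 2 :=
    ⟨√(1 - ℓ ^ 2), Real.sqrt_pos.2 hl, Real.sq_sqrt hl.le⟩
  set i0 : Fin N := ⟨0, hpos⟩ with hi0
  have hFnn : ∀ i x, 0 ≤ F N i x := fun i x => by unfold F; positivity
  have hFint : ∀ i, Integrable (F N i) := by
    intro i
    refine hint.mono' (F_cont N h3 i).aestronglyMeasurable (ae_of_all _ fun x => ?_)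
    rw [norm_grad_W N h3, Real.norm_of_nonneg (hFnn i x)]
    exact Finset.single_le_sum (f := fun i => F N i x) (fun i _ => hFnn i x) (Finset.mem_univ i)
  set k := ∫ x, F N i0 x with hk
  have hk0 : 0 ≤ k := integral_nonneg (hFnn i0)
  have hFk : ∀ i, ∫ x, F N i x = k := fun i => F_swap N i i0
  have hK : ∫ x, ‖gradient (W N) x‖ ^ 2 = N * k := by
    simp only [norm_grad_W N h3]
    rw [integral_finsetSum _ fun i _ => hFint i]
    simp [hFk]
  have hprod : ∏ i, dv N i0 s i = 1 / s := by
    simp [dv, Finset.prod_ite_eq']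
  have hne : ∏ i, dv N i0 s i ≠ 0 := by rw [hprod]; positivity
  have habs : |(∏ i, dv N i0 s i)⁻¹| = s := by
    rw [hprod]; simp [abs_of_pos hs]
  have hT : ∫ x, dtWl N ℓ t x ^ 2 = ℓ ^ 2 / s * k := by
    simp only [dtWl_eq N h3 ℓ s t hs hs2]
    rw [integral_const_mul, int_comp N _ hne, habs, hFk]
    field_simp
  have hG : ∫ x, ‖gradient (Wl N ℓ t) x‖ ^ 2 = s * ((1 / s ^ 2 + (N - 1)) * k) := by
    rw [show Wl N ℓ t = _ from funext fun x => Wl_eq N h3 ℓ s t hs hs2 x]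
    simp only [norm_grad N h3]
    rw [int_comp N _ hne _ (fun y => ∑ i, dv N i0 s i ^ 2 * F N i y), habs,
      integral_finsetSum _ fun i _ => (hFint i).const_mul _]
    simp only [integral_const_mul, hFk]
    rw [← Finset.sum_mul]
    congr 2
    rw [← Finset.add_sum_erase _ _ (Finset.mem_univ i0)]
    congr 1
    · simp [dv]
    · rw [Finset.sum_congr rfl (g := fun _ => (1 : ℝ)) fun i hi => by
        simp [dv, Finset.ne_of_mem_erase hi]]
      simp [Finset.card_erase_of_mem, Nat.cast_sub (show 1 ≤ N by omega)]
  rw [hK, hG, hT]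
  have key := num_ineq (ℓ ^ 2) s (by positivity) hs hs2
  have e : s * ((1 / s ^ 2 + (N - 1)) * k) + ((N : ℝ) - 2) / 2 * (ℓ ^ 2 / s * k)
      = ((1 - ℓ ^ 2 / 2) / s) * (N * k) := by
    field_simp
    rw [hs2]; ring
  rw [e]
  refine mul_le_mul_of_nonneg_right ?_ (by positivity)
  rw [le_div_iff₀ hs]
  calc _ = (1 + (ℓ ^ 2) ^ 2 / 8) * s := by ring
    _ ≤ _ := key

end
end

section
/- Let N ∈ {3,4,5} and ℓ ∈ (−1,1). Then E(W_ℓ(0,·), ∂_t W_ℓ(0,·)) = (1/√(1−ℓ²))·E(W,0). -/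
open MeasureTheory Metric Filter Set

noncomputable section

/-- Profile `(1 + r²/(N(N-2)))^{-N}`. -/
def FF (N : ℕ) (r : ℝ) : ℝ := ((1 + r ^ 2 / ((N : ℝ) * ((N : ℝ) - 2))) ^ N)⁻¹

lemma c_pos {N : ℕ} (hN : 3 ≤ N) : 3 ≤ (N : ℝ) * ((N : ℝ) - 2) := by
  have : (3 : ℝ) ≤ N := by exact_mod_cast hN
  nlinarith

lemma u_pos {N : ℕ} (hN : 3 ≤ N) (r : ℝ) : 0 < 1 + r ^ 2 / ((N : ℝ) * ((N : ℝ) - 2)) := by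
  have := c_pos hN
  positivity

lemma FF_cont {N : ℕ} (hN : 3 ≤ N) : Continuous (FF N) := by
  unfold FF
  refine Continuous.inv₀ (by fun_prop) ?_
  intro r
  have := u_pos hN r
  positivity

lemma FF_pos {N : ℕ} (hN : 3 ≤ N) (r : ℝ) : 0 < FF N r := by
  unfold FF
  have := u_pos hN r
  positivity

lemma pw_integrable {N : ℕ} (hN : 3 ≤ N) :
    Integrable (fun x : EuclideanSpace ℝ (Fin N) => (1 + ‖x‖ ^ 2) * FF N ‖x‖) := by
  have hN' : (3 : ℝ) ≤ N := by exact_mod_cast hN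
  have h := integrable_rpow_neg_one_add_norm_sq (E := EuclideanSpace ℝ (Fin N)) (μ := volume)
    (r := 2 * ((N : ℝ) - 1)) (by simp; linarith)
  have hF := FF_cont hN
  refine (h.const_mul (((N : ℝ) * ((N : ℝ) - 2)) ^ N)).mono'
    (by fun_prop) (Eventually.of_forall fun x => ?_)
  have hc := c_pos hN
  have hu := u_pos hN ‖x‖
  have hp := FF_pos hN ‖x‖
  rw [Real.norm_of_nonneg (by positivity)]
  have e1 : (1 + ‖x‖ ^ 2) ^ (-(2 * ((N : ℝ) - 1)) / 2)
      = (1 + ‖x‖ ^ 2) * ((1 + ‖x‖ ^ 2) ^ N)⁻¹ := by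
    rw [show -(2 * ((N : ℝ) - 1)) / 2 = 1 - (N : ℝ) by ring, Real.rpow_sub (by positivity),
      Real.rpow_one, Real.rpow_natCast, div_eq_mul_inv]
  rw [e1]
  have e2 : FF N ‖x‖ ≤ ((N : ℝ) * ((N : ℝ) - 2)) ^ N * ((1 + ‖x‖ ^ 2) ^ N)⁻¹ := by
    unfold FF
    rw [← inv_pow, ← inv_pow, ← mul_pow]
    refine pow_le_pow_left₀ (by positivity) ?_ _
    set c := (N : ℝ) * ((N : ℝ) - 2)
    rw [inv_le_iff_one_le_mul₀ (by positivity)]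
    have : c * (1 + ‖x‖ ^ 2)⁻¹ * (1 + ‖x‖ ^ 2 / c) = (c + ‖x‖ ^ 2) / (1 + ‖x‖ ^ 2) := by
      field_simp
    rw [this, one_le_div (by positivity)]
    linarith
  calc (1 + ‖x‖ ^ 2) * FF N ‖x‖
      ≤ (1 + ‖x‖ ^ 2) * (((N : ℝ) * ((N : ℝ) - 2)) ^ N * ((1 + ‖x‖ ^ 2) ^ N)⁻¹) := by gcongr
    _ = _ := by ring

lemma F_integrable {N : ℕ} (hN : 3 ≤ N) :
    Integrable (fun x : EuclideanSpace ℝ (Fin N) => FF N ‖x‖) := by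
  have hF := FF_cont hN
  refine (pw_integrable hN).mono' (by fun_prop) (Eventually.of_forall fun x => ?_)
  have hp := FF_pos hN ‖x‖
  rw [Real.norm_of_nonneg hp.le]
  nlinarith [sq_nonneg ‖x‖]

lemma F2_integrable {N : ℕ} (hN : 3 ≤ N) :
    Integrable (fun x : EuclideanSpace ℝ (Fin N) => ‖x‖ ^ 2 * FF N ‖x‖) := by
  have hF := FF_cont hN
  refine (pw_integrable hN).mono' (by fun_prop) (Eventually.of_forall fun x => ?_)
  have hp := FF_pos hN ‖x‖
  rw [Real.norm_of_nonneg (by positivity)]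
  nlinarith [sq_nonneg ‖x‖]

lemma Fi_integrable {N : ℕ} (hN : 3 ≤ N) (i : Fin N) :
    Integrable (fun x : EuclideanSpace ℝ (Fin N) => x i ^ 2 * FF N ‖x‖) := by
  have hF := FF_cont hN
  refine (F2_integrable hN).mono' (by fun_prop) (Eventually.of_forall fun x => ?_)
  have hp := FF_pos hN ‖x‖
  rw [Real.norm_of_nonneg (by positivity)]
  have := PiLp.norm_apply_le x i
  rw [Real.norm_eq_abs] at this
  have : x i ^ 2 ≤ ‖x‖ ^ 2 := by
    rw [← sq_abs]; gcongr
  gcongr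

/-- Pohozaev-type identity. -/
lemma pohozaev {N : ℕ} (hN : 3 ≤ N) :
    ∫ x : EuclideanSpace ℝ (Fin N), ‖x‖ ^ 2 * FF N ‖x‖
      = (N : ℝ) ^ 2 * ∫ x : EuclideanSpace ℝ (Fin N), FF N ‖x‖ := by
  have hN' : (3 : ℝ) ≤ N := by exact_mod_cast hN
  have hc := c_pos hN
  have : NeZero N := ⟨by omega⟩
  have : Nontrivial (EuclideanSpace ℝ (Fin N)) :=
    Module.nontrivial_of_finrank_pos (R := ℝ) (by simp; omega)
  have hI : Integrable (fun x : EuclideanSpace ℝ (Fin N) =>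
      (N - ‖x‖ ^ 2 / N) * FF N ‖x‖) := by
    convert ((F_integrable hN).const_mul (N : ℝ)).sub ((F2_integrable hN).const_mul (N : ℝ)⁻¹)
      using 2 with x
    simp only [Pi.sub_apply]; ring
  have h0 : ∫ x : EuclideanSpace ℝ (Fin N), (N - ‖x‖ ^ 2 / N) * FF N ‖x‖ = 0 := by
    have hI' := (integrable_fun_norm_addHaar (volume : Measure (EuclideanSpace ℝ (Fin N)))
      (f := fun r => (N - r ^ 2 / N) * FF N r)).1 hI
    rw [integral_fun_norm_addHaar (volume : Measure (EuclideanSpace ℝ (Fin N)))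
      (fun r => (N - r ^ 2 / N) * FF N r)]
    simp only [finrank_euclideanSpace, Fintype.card_fin] at hI' ⊢
    have key := integral_Ioi_of_hasDerivAt_of_tendsto (a := 0) (m := 0)
      (f := fun r : ℝ => r ^ N * ((1 + r ^ 2 / ((N : ℝ) * ((N : ℝ) - 2))) ^ (N - 1))⁻¹)
      (f' := fun r => r ^ (N - 1) • ((N - r ^ 2 / N) * FF N r)) ?_ ?_ hI' ?_
    · rw [key]; simp
      right; right; omega
    · refine Continuous.continuousWithinAt ?_
      refine Continuous.mul (by fun_prop) (Continuous.inv₀ (by fun_prop) ?_)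
      intro r
      have := u_pos hN r
      positivity
    · intro r _
      have hu := u_pos hN r
      have hd : HasDerivAt (fun r : ℝ => 1 + r ^ 2 / ((N : ℝ) * ((N : ℝ) - 2)))
          (2 * r / ((N : ℝ) * ((N : ℝ) - 2))) r := by
        simpa using ((hasDerivAt_pow 2 r).div_const ((N : ℝ) * ((N : ℝ) - 2))).const_add 1
      have := (hasDerivAt_pow N r).mul ((hd.pow (N - 1)).inv (by
        simp only [Pi.pow_apply]; positivity))
      refine this.congr_deriv ?_
      obtain ⟨M, rfl⟩ : ∃ M, N = M + 2 := ⟨N - 2, by omega⟩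
      simp only [FF, smul_eq_mul, Nat.add_sub_cancel, show M + 2 - 1 = M + 1 by omega, Pi.pow_apply, Pi.inv_apply]
      push_cast at hN' hc hu ⊢
      have hM : (M : ℝ) ≠ 0 := by intro h; rw [h] at hN'; norm_num at hN'
      have hv : (1 + r ^ 2 / (((M : ℝ) + 2) * ((M : ℝ) + 2 - 2))) ≠ 0 := hu.ne'
      have hcc : ((M : ℝ) + 2) * ((M : ℝ) + 2 - 2) * (1 + r ^ 2 / (((M : ℝ) + 2) * ((M : ℝ) + 2 - 2))) = (M + 2) * M + r ^ 2 := by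
        have : (M : ℝ) + 2 - 2 ≠ 0 := by rwa [add_sub_cancel_right]
        field_simp
        ring
      set v := (1 + r ^ 2 / (((M : ℝ) + 2) * ((M : ℝ) + 2 - 2)))
      rw [show (M : ℝ) + 2 - 2 = M by ring] at hcc ⊢
      have hr : r ^ 2 = (M + 2) * M * v - (M + 2) * M := by linarith
      have h2 : (M : ℝ) + 2 ≠ 0 := by positivity
      have e1 : ((M : ℝ) + 2) - r ^ 2 / (M + 2)
          = (M + 2) * v - 2 * (M + 1) * r ^ 2 / ((M + 2) * M) := by
        rw [hr]; field_simp; ring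
      rw [e1]
      simp only [pow_succ]
      field_simp
      try ring
    · have hb : ∀ᶠ r : ℝ in atTop, r ^ N * ((1 + r ^ 2 / ((N : ℝ) * ((N : ℝ) - 2))) ^ (N - 1))⁻¹
          ≤ ((N : ℝ) * ((N : ℝ) - 2)) ^ (N - 1) * r⁻¹ := by
        filter_upwards [eventually_ge_atTop 1] with r hr
        have hu := u_pos hN r
        set c := (N : ℝ) * ((N : ℝ) - 2)
        have h1 : (r ^ 2 / c) ^ (N - 1) ≤ (1 + r ^ 2 / c) ^ (N - 1) := by
          gcongr; linarith
        have h2 : ((1 + r ^ 2 / c) ^ (N - 1))⁻¹ ≤ ((r ^ 2 / c) ^ (N - 1))⁻¹ := by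
          gcongr
        calc _ ≤ r ^ N * ((r ^ 2 / c) ^ (N - 1))⁻¹ := by gcongr
          _ = c ^ (N - 1) * (r ^ N / r ^ (2 * (N - 1))) := by
            rw [div_pow, inv_div, ← pow_mul]; ring
          _ ≤ _ := by
            gcongr
            rw [div_le_iff₀ (by positivity), inv_mul_eq_div, le_div_iff₀ (by positivity), ← pow_succ]
            exact pow_le_pow_right₀ hr (by omega)
      refine tendsto_of_tendsto_of_tendsto_of_le_of_le' tendsto_const_nhds ?_ ?_ hb
      · simpa using tendsto_inv_atTop_zero.const_mul (((N : ℝ) * ((N : ℝ) - 2)) ^ (N - 1))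
      · filter_upwards [eventually_ge_atTop 0] with r hr
        have hu := u_pos hN r
        positivity
  have h1 : ∫ x : EuclideanSpace ℝ (Fin N), (N - ‖x‖ ^ 2 / N) * FF N ‖x‖
      = N * (∫ x : EuclideanSpace ℝ (Fin N), FF N ‖x‖)
        - (N : ℝ)⁻¹ * ∫ x : EuclideanSpace ℝ (Fin N), ‖x‖ ^ 2 * FF N ‖x‖ := by
    rw [← integral_const_mul, ← integral_const_mul,
      ← integral_sub ((F_integrable hN).const_mul _) ((F2_integrable hN).const_mul _)]
    congr 1; ext x; ring
  rw [h0] at h1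
  have : (N : ℝ) ≠ 0 := by positivity
  field_simp at h1
  linarith

lemma symm_int {N : ℕ} (hN : 3 ≤ N) (j : Fin N) :
    (N : ℝ) * ∫ x : EuclideanSpace ℝ (Fin N), x j ^ 2 * FF N ‖x‖
      = ∫ x : EuclideanSpace ℝ (Fin N), ‖x‖ ^ 2 * FF N ‖x‖ := by
  have h : ∀ i : Fin N, ∫ x : EuclideanSpace ℝ (Fin N), x i ^ 2 * FF N ‖x‖
      = ∫ x : EuclideanSpace ℝ (Fin N), x j ^ 2 * FF N ‖x‖ := by
    intro i
    let e := LinearIsometryEquiv.piLpCongrLeft 2 ℝ ℝ (Equiv.swap i j)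
    have hm := e.measurePreserving
    have := hm.integral_comp e.toHomeomorph.measurableEmbedding
      (fun x : EuclideanSpace ℝ (Fin N) => x i ^ 2 * FF N ‖x‖)
    rw [← this]
    congr 1; ext x
    rw [e.norm_map]
    simp [e, LinearIsometryEquiv.piLpCongrLeft_apply]
  have h2 : ∫ x : EuclideanSpace ℝ (Fin N), ‖x‖ ^ 2 * FF N ‖x‖
      = ∑ i : Fin N, ∫ x : EuclideanSpace ℝ (Fin N), x i ^ 2 * FF N ‖x‖ := by
    rw [← integral_finsetSum _ (fun i _ => Fi_integrable hN i)]
    congr 1; ext x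
    rw [EuclideanSpace.norm_sq_eq, Finset.sum_mul]
    simp
  rw [h2]
  simp [h]

/-- The linear map `x ↦ (γ x₁, x₂, …)`. -/
def LL (N : ℕ) (j : Fin N) (γ : ℝ) : EuclideanSpace ℝ (Fin N) →ₗ[ℝ] EuclideanSpace ℝ (Fin N) :=
  Matrix.toLin (PiLp.basisFun 2 ℝ (Fin N)) (PiLp.basisFun 2 ℝ (Fin N))
    (Matrix.diagonal (fun i => if i = j then γ else 1))

lemma LL_apply (N : ℕ) (j : Fin N) (γ : ℝ) (x : EuclideanSpace ℝ (Fin N)) (i : Fin N) :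
    LL N j γ x i = (if i = j then γ else 1) * x i := by
  unfold LL
  rw [← Matrix.toLpLin_eq_toLin]
  simp [Matrix.toLpLin_apply, Matrix.mulVec_diagonal]

lemma LL_norm (N : ℕ) (j : Fin N) (γ : ℝ) (x : EuclideanSpace ℝ (Fin N)) :
    ‖LL N j γ x‖ ^ 2 = ‖x‖ ^ 2 + (γ ^ 2 - 1) * x j ^ 2 := by
  rw [EuclideanSpace.norm_sq_eq, EuclideanSpace.norm_sq_eq]
  simp only [LL_apply, Real.norm_eq_abs, sq_abs]
  have : ∀ i, ((if i = j then γ else 1) * x i) ^ 2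
      = x i ^ 2 + if i = j then (γ ^ 2 - 1) * x i ^ 2 else 0 := by
    intro i; split_ifs <;> ring
  simp_rw [this]
  rw [Finset.sum_add_distrib]
  simp

lemma LL_int (N : ℕ) (j : Fin N) {γ : ℝ} (hγ : 0 < γ) {g : EuclideanSpace ℝ (Fin N) → ℝ}
    (hg : Continuous g) : ∫ x, g (LL N j γ x) = γ⁻¹ * ∫ x, g x := by
  have hd : LinearMap.det (LL N j γ) = γ := by
    unfold LL
    rw [LinearMap.det_toLin, Matrix.det_diagonal]
    simp
  have := Measure.map_linearMap_addHaar_eq_smul_addHaar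
    (volume : Measure (EuclideanSpace ℝ (Fin N))) (f := LL N j γ) (by rw [hd]; exact hγ.ne')
  rw [← integral_map (φ := LL N j γ)
    (LinearMap.continuous_of_finiteDimensional _).measurable.aemeasurable
    hg.aestronglyMeasurable, this, integral_smul_measure, hd, abs_of_pos (by positivity),
    ENNReal.toReal_ofReal (by positivity), smul_eq_mul]

/-- The anisotropic profile. -/
def V (N : ℕ) (j : Fin N) (a : ℝ) (x : EuclideanSpace ℝ (Fin N)) : ℝ :=
  (1 + (‖x‖ ^ 2 + a * x j ^ 2) / ((N : ℝ) * ((N : ℝ) - 2))) ^ (-(((N : ℝ) - 2) / 2))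

lemma rpow_half {N : ℕ} {u : ℝ} (hu : 0 < u) : (u ^ (-(((N : ℝ) - 2) / 2) - 1)) ^ 2 = (u ^ N)⁻¹ := by
  rw [← Real.rpow_natCast, ← Real.rpow_mul hu.le, ← Real.rpow_natCast, ← Real.rpow_neg hu.le]
  congr 1; push_cast; ring

lemma V_grad {N : ℕ} (hN : 3 ≤ N) (j : Fin N) {a : ℝ} (ha : 0 ≤ a) (x : EuclideanSpace ℝ (Fin N)) :
    ‖gradient (V N j a) x‖ ^ 2 = ((N : ℝ) ^ 2)⁻¹ * (‖x‖ ^ 2 + (2 * a + a ^ 2) * x j ^ 2)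
      * ((1 + (‖x‖ ^ 2 + a * x j ^ 2) / ((N : ℝ) * ((N : ℝ) - 2))) ^ N)⁻¹ := by
  have hN' : (3 : ℝ) ≤ N := by exact_mod_cast hN
  have hc := c_pos hN
  have hu : 0 < (1 + (‖x‖ ^ 2 + a * x j ^ 2) / ((N : ℝ) * ((N : ℝ) - 2))) := by positivity
  have hj : HasFDerivAt (fun y : EuclideanSpace ℝ (Fin N) => y j)
      (EuclideanSpace.proj j : EuclideanSpace ℝ (Fin N) →L[ℝ] ℝ) x :=
    (EuclideanSpace.proj j : EuclideanSpace ℝ (Fin N) →L[ℝ] ℝ).hasFDerivAt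
  have h1 := (((((hasStrictFDerivAt_norm_sq x).hasFDerivAt.add
    ((hj.pow 2).const_mul a)).mul_const ((N : ℝ) * ((N : ℝ) - 2))⁻¹).const_add 1).rpow_const
      (p := -(((N : ℝ) - 2) / 2)) (Or.inl (by simpa [div_eq_mul_inv] using hu.ne')))
  have hg : HasGradientAt (V N j a)
      ((-(N : ℝ)⁻¹ * (1 + (‖x‖ ^ 2 + a * x j ^ 2) / ((N : ℝ) * ((N : ℝ) - 2))) ^ (-(((N : ℝ) - 2) / 2) - 1))
        • (x + (a * x j) • EuclideanSpace.single j (1 : ℝ))) x := by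
    rw [hasGradientAt_iff_hasFDerivAt]
    refine h1.congr_fderiv ?_
    ext y
    simp [inner_add_left, inner_smul_left, EuclideanSpace.inner_single_left, div_eq_mul_inv]
    have : (N : ℝ) - 2 ≠ 0 := by linarith
    field_simp
  rw [hg.gradient, norm_smul, mul_pow, Real.norm_eq_abs, sq_abs, mul_pow, rpow_half hu,
    norm_add_sq_real, inner_smul_right, norm_smul, EuclideanSpace.inner_single_right]
  simp [mul_pow]
  ring

lemma V_pow {N : ℕ} (hN : 3 ≤ N) (j : Fin N) {a : ℝ} (ha : 0 ≤ a) (x : EuclideanSpace ℝ (Fin N)) :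
    |V N j a x| ^ (2 * (N : ℝ) / ((N : ℝ) - 2))
      = ((1 + (‖x‖ ^ 2 + a * x j ^ 2) / ((N : ℝ) * ((N : ℝ) - 2))) ^ N)⁻¹ := by
  have hN' : (3 : ℝ) ≤ N := by exact_mod_cast hN
  have hc := c_pos hN
  have hu : 0 < (1 + (‖x‖ ^ 2 + a * x j ^ 2) / ((N : ℝ) * ((N : ℝ) - 2))) := by positivity
  have : (N : ℝ) - 2 ≠ 0 := by linarith
  unfold V
  rw [abs_of_pos (by positivity), ← Real.rpow_mul hu.le, ← Real.rpow_natCast _ N, ← Real.rpow_neg hu.le]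
  congr 1
  field_simp

lemma dt_sq {N : ℕ} (hN : 3 ≤ N) {ℓ : ℝ} (hℓ : 0 < 1 - ℓ ^ 2) (x : EuclideanSpace ℝ (Fin N)) :
    dtWl N ℓ 0 x ^ 2 = ((N : ℝ) ^ 2)⁻¹ * (ℓ ^ 2 * ((1 - ℓ ^ 2)⁻¹) ^ 2 * x ⟨0, by omega⟩ ^ 2)
      * ((1 + (‖x‖ ^ 2 + ((1 - ℓ ^ 2)⁻¹ - 1) * x ⟨0, by omega⟩ ^ 2) / ((N : ℝ) * ((N : ℝ) - 2))) ^ N)⁻¹ := by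
  have hN' : (3 : ℝ) ≤ N := by exact_mod_cast hN
  have hc := c_pos hN
  have hf : firstCoord x = x ⟨0, by omega⟩ := by simp [firstCoord, show 0 < N by omega]
  have ha : 0 ≤ (1 - ℓ ^ 2)⁻¹ - 1 := by
    rw [sub_nonneg, one_le_inv₀ hℓ]; nlinarith [sq_nonneg ℓ]
  set j : Fin N := ⟨0, by omega⟩
  have hu : 0 < (1 + (‖x‖ ^ 2 + ((1 - ℓ ^ 2)⁻¹ - 1) * x j ^ 2) / ((N : ℝ) * ((N : ℝ) - 2))) := by positivity
  have heq : 1 + (x j - 0 * ℓ) ^ 2 / ((N : ℝ) * ((N : ℝ) - 2) * (1 - ℓ ^ 2))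
     + (‖x‖ ^ 2 - x j ^ 2) / ((N : ℝ) * ((N : ℝ) - 2))
      = 1 + (‖x‖ ^ 2 + ((1 - ℓ ^ 2)⁻¹ - 1) * x j ^ 2) / ((N : ℝ) * ((N : ℝ) - 2)) := by
    rw [div_eq_mul_inv, mul_inv]; ring
  have hd := (((((((hasDerivAt_id (0 : ℝ)).mul_const ℓ).const_sub (x j)).pow 2).div_const
    ((N : ℝ) * ((N : ℝ) - 2) * (1 - ℓ ^ 2))).const_add 1).add_const
    ((‖x‖ ^ 2 - x j ^ 2) / ((N : ℝ) * ((N : ℝ) - 2)))).rpow_const (p := -(((N : ℝ) - 2) / 2))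
    (Or.inl (by
      simp only [Pi.pow_apply, id]
      rw [heq]; exact hu.ne'))
  unfold dtWl Wl
  rw [hf]
  refine (congrArg (· ^ 2) hd.deriv).trans ?_
  simp only [Pi.pow_apply, id]
  rw [heq, mul_pow, rpow_half hu]
  have : (N : ℝ) - 2 ≠ 0 := by linarith
  have : (N : ℝ) ≠ 0 := by linarith
  have := hℓ.ne'
  congr 1
  simp
  field_simp

/-- Claim 2.3, third line: the energy of the solitary wave `W_ℓ`. -/
theorem stmt4 (N : ℕ) (hN : N = 3 ∨ N = 4 ∨ N = 5)
    (ℓ : ℝ) (hℓ : ℓ ∈ Set.Ioo (-1 : ℝ) 1) :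
    energy N (Wl N ℓ 0) (dtWl N ℓ 0)
      = (1 / Real.sqrt (1 - ℓ ^ 2)) * energy N (W N) 0 := by
  replace hN : 3 ≤ N := by omega
  have hN' : (3 : ℝ) ≤ N := by exact_mod_cast hN
  have hℓ' : 0 < 1 - ℓ ^ 2 := by nlinarith [hℓ.1, hℓ.2]
  have ha : 0 ≤ (1 - ℓ ^ 2)⁻¹ - 1 := by
    rw [sub_nonneg, one_le_inv₀ hℓ']; nlinarith [sq_nonneg ℓ]
  obtain ⟨γ, hγ, hγe⟩ : ∃ γ : ℝ, 0 < γ ∧ 1 / Real.sqrt (1 - ℓ ^ 2) = γ :=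
    ⟨_, by positivity, rfl⟩
  have hγ2 : (1 - ℓ ^ 2)⁻¹ = γ ^ 2 := by
    rw [← hγe, div_pow, Real.sq_sqrt hℓ'.le]; simp
  have hℓγ : ℓ ^ 2 * γ ^ 2 = γ ^ 2 - 1 := by
    rw [← hγ2]; field_simp; ring
  rw [hγe]
  let j : Fin N := ⟨0, by omega⟩
  have hW : W N = V N j 0 := by ext x; simp [W, V]
  have hWl : Wl N ℓ 0 = V N j ((1 - ℓ ^ 2)⁻¹ - 1) := by
    ext x
    have hf : firstCoord x = x j := by simp [firstCoord, show 0 < N by omega, j]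
    unfold Wl V
    rw [hf]
    congr 1
    rw [div_eq_mul_inv, mul_inv]; ring
  have hLF : ∀ x : EuclideanSpace ℝ (Fin N),
      ((1 + (‖x‖ ^ 2 + (γ ^ 2 - 1) * x j ^ 2) / ((N : ℝ) * ((N : ℝ) - 2))) ^ N)⁻¹
        = FF N ‖LL N j γ x‖ := by
    intro x; rw [FF, LL_norm]
  have hLj : ∀ x : EuclideanSpace ℝ (Fin N), LL N j γ x j = γ * x j := by
    intro x; simp [LL_apply]
  have hF := FF_cont hN
  have hP := pohozaev hN
  have hS := symm_int hN j
  set I0 := ∫ x : EuclideanSpace ℝ (Fin N), FF N ‖x‖ with hI0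
  set I2 := ∫ x : EuclideanSpace ℝ (Fin N), ‖x‖ ^ 2 * FF N ‖x‖ with hI2
  set J := ∫ x : EuclideanSpace ℝ (Fin N), x j ^ 2 * FF N ‖x‖ with hJ
  have A1 : ∫ x, dtWl N ℓ 0 x ^ 2 = γ⁻¹ * (((N : ℝ) ^ 2)⁻¹ * (γ ^ 2 - 1) * J) := by
    rw [hJ, ← integral_const_mul, ← LL_int N j hγ (by fun_prop)]
    congr 1; ext x
    rw [dt_sq hN hℓ', hγ2, hLF, hLj, ← hℓγ]; ring
  have A2 : ∫ x, ‖gradient (Wl N ℓ 0) x‖ ^ 2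
      = γ⁻¹ * (((N : ℝ) ^ 2)⁻¹ * (I2 + (γ ^ 2 - 1) * J)) := by
    rw [hJ, hI2, ← integral_const_mul, ← integral_add (F2_integrable hN)
      ((Fi_integrable hN j).const_mul _), ← integral_const_mul, ← LL_int N j hγ (by fun_prop)]
    congr 1; ext x
    rw [hWl, V_grad hN j ha, hγ2, hLF, hLj, LL_norm]; ring
  have A3 : ∫ x, |Wl N ℓ 0 x| ^ (2 * (N : ℝ) / ((N : ℝ) - 2)) = γ⁻¹ * I0 := by
    rw [hI0, ← LL_int N j hγ (by fun_prop)]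
    congr 1; ext x
    rw [hWl, V_pow hN j ha, hγ2, hLF]
  have B2 : ∫ x, ‖gradient (W N) x‖ ^ 2 = ((N : ℝ) ^ 2)⁻¹ * I2 := by
    rw [hI2, ← integral_const_mul]
    congr 1; ext x
    rw [hW, V_grad hN j le_rfl, FF]; simp; ring
  have B3 : ∫ x, |W N x| ^ (2 * (N : ℝ) / ((N : ℝ) - 2)) = I0 := by
    rw [hI0]
    congr 1; ext x
    rw [hW, V_pow hN j le_rfl, FF]; simp
  unfold energy
  rw [A1, A2, A3, B2, B3]
  have hn0 : (N : ℝ) ≠ 0 := by linarith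
  have hJ' : J = N * I0 := by
    have : (N : ℝ) * (J - N * I0) = 0 := by rw [mul_sub, hS, hP]; ring
    rcases mul_eq_zero.1 this with h | h
    · exact absurd h hn0
    · linarith
  rw [hJ', hP]
  simp
  field_simp
  ring

end
end

section
/- Let N ∈ {3,4,5} and ℓ ∈ (−1,1). Then the momentum vector ∫_{ℝ^N} ∇_x W_ℓ(0,x)·∂_t W_ℓ(0,x) dx ∈ ℝ^N equals −(ℓ/√(1−ℓ²))·E(W,0)·e₁, where e₁ = (1,0,…,0); equivalently it equals −ℓ·E(W_ℓ(0,·),∂_t W_ℓ(0,·))·e₁. -/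
open MeasureTheory Metric Filter Set

noncomputable section

abbrev EN (N : ℕ) := EuclideanSpace ℝ (Fin N)

def cN (N : ℕ) : ℝ := (N : ℝ) * ((N : ℝ) - 2)

lemma cN_ge {N : ℕ} (hN : 3 ≤ N) : 1 ≤ cN N := by
  have h : (3 : ℝ) ≤ N := by exact_mod_cast hN
  unfold cN; nlinarith

/-- `(1+|x|²/c)^{-N}` -/
def gN (N : ℕ) (x : EN N) : ℝ := ((1 + ‖x‖ ^ 2 / cN N) ^ N)⁻¹

lemma gN_pos {N : ℕ} (hN : 3 ≤ N) (x : EN N) : 0 < gN N x := by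
  have := cN_ge hN
  unfold gN; positivity

lemma gN_cont {N : ℕ} (hN : 3 ≤ N) : Continuous (gN N) := by
  have := cN_ge hN
  unfold gN
  refine Continuous.inv₀ (by fun_prop) (fun x => ?_)
  positivity

lemma gN_int2 {N : ℕ} (hN : 3 ≤ N) : Integrable (fun x : EN N => (1 + ‖x‖ ^ 2) * gN N x) := by
  have hc := cN_ge hN
  have h3 : (3 : ℝ) ≤ N := by exact_mod_cast hN
  have h := integrable_rpow_neg_one_add_norm_sq (E := EN N) (μ := volume) (r := 2 * ((N : ℝ) - 1))
    (by rw [finrank_euclideanSpace_fin]; linarith)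
  refine (h.const_mul (cN N ^ N)).mono'
    (((by fun_prop : Continuous fun x : EN N => 1 + ‖x‖ ^ 2).mul
      (gN_cont hN)).aestronglyMeasurable) (Eventually.of_forall fun x => ?_)
  have hg := gN_pos hN x
  have hp : 0 < 1 + ‖x‖ ^ 2 := by positivity
  rw [Real.norm_eq_abs, abs_of_pos (by positivity)]
  have e : (1 + ‖x‖ ^ 2) ^ (-(2 * ((N : ℝ) - 1)) / 2) = (1 + ‖x‖ ^ 2) * ((1 + ‖x‖ ^ 2) ^ N)⁻¹ := by
    rw [show -(2 * ((N : ℝ) - 1)) / 2 = 1 + -(N : ℝ) by ring, Real.rpow_add hp, Real.rpow_one,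
      Real.rpow_neg hp.le, Real.rpow_natCast]
  have k : gN N x ≤ cN N ^ N * ((1 + ‖x‖ ^ 2) ^ N)⁻¹ := by
    unfold gN
    rw [← div_eq_mul_inv, ← div_pow, ← inv_pow]
    apply pow_le_pow_left₀ (by positivity)
    rw [inv_eq_one_div, div_le_div_iff₀ (by positivity) (by positivity)]
    have : cN N * (1 + ‖x‖ ^ 2 / cN N) = cN N + ‖x‖ ^ 2 := by field_simp
    rw [this]; linarith
  rw [e]
  calc _ ≤ (1 + ‖x‖ ^ 2) * (cN N ^ N * ((1 + ‖x‖ ^ 2) ^ N)⁻¹) := by gcongr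
    _ = _ := by ring

lemma gN_int_of_bound {N : ℕ} (hN : 3 ≤ N) {p : EN N → ℝ} (hp : Continuous p)
    (hb : ∀ x, |p x| ≤ 1 + ‖x‖ ^ 2) : Integrable (fun x : EN N => p x * gN N x) := by
  refine (gN_int2 hN).mono' ((hp.mul (gN_cont hN)).aestronglyMeasurable)
    (Eventually.of_forall fun x => ?_)
  have hg := gN_pos hN x
  rw [Real.norm_eq_abs, abs_mul, abs_of_pos hg]
  exact mul_le_mul_of_nonneg_right (hb x) hg.le

lemma coord_sq_le {N : ℕ} (x : EN N) (i : Fin N) : x i ^ 2 ≤ ‖x‖ ^ 2 := by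
  rw [EuclideanSpace.real_norm_sq_eq]
  exact Finset.single_le_sum (f := fun i => x i ^ 2) (fun j _ => sq_nonneg _) (Finset.mem_univ i)

lemma gN_int_coord {N : ℕ} (hN : 3 ≤ N) (i j : Fin N) :
    Integrable (fun x : EN N => (x i * x j) * gN N x) := by
  refine gN_int_of_bound hN (by fun_prop) fun x => ?_
  have h1 := coord_sq_le x i
  have h2 := coord_sq_le x j
  rw [abs_le]
  constructor <;> nlinarith [sq_nonneg (x i - x j), sq_nonneg (x i + x j)]

lemma gN_int {N : ℕ} (hN : 3 ≤ N) : Integrable (gN N) := by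
  have := gN_int_of_bound hN (p := fun _ => 1) (by fun_prop) (fun x => by
    rw [abs_one]; nlinarith [sq_nonneg ‖x‖])
  simpa using this

lemma gN_int_sq {N : ℕ} (hN : 3 ≤ N) : Integrable (fun x : EN N => ‖x‖ ^ 2 * gN N x) := by
  refine gN_int_of_bound hN (by fun_prop) fun x => ?_
  rw [abs_of_nonneg (by positivity)]; linarith

/-- the total second moment -/
def AN (N : ℕ) : ℝ := ∫ x : EN N, ‖x‖ ^ 2 * gN N x

/-- Pohozaev-type identity -/
lemma pohozaev_s5 {N : ℕ} (hN : 3 ≤ N) : ∫ x : EN N, gN N x = AN N / (N : ℝ) ^ 2 := by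
  have hc := cN_ge hN
  have h3 : (3 : ℝ) ≤ N := by exact_mod_cast hN
  have hN0 : (N : ℝ) ≠ 0 := by positivity
  have : Nonempty (Fin N) := ⟨⟨0, by omega⟩⟩
  have : Nontrivial (EN N) := inferInstance
  let φ : ℝ → ℝ := fun r => (N - r ^ 2 / N) * ((1 + r ^ 2 / cN N) ^ N)⁻¹
  have hφi : Integrable (fun x : EN N => φ ‖x‖) := by
    have := ((gN_int hN).const_mul (N : ℝ)).sub ((gN_int_sq hN).const_mul (1 / (N : ℝ)))
    refine this.congr (Eventually.of_forall fun x => ?_)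
    simp only [φ, gN, Pi.sub_apply]; ring
  have hφ0 : ∫ x : EN N, φ ‖x‖ = 0 := by
    rw [integral_fun_norm_addHaar]
    rw [integrable_fun_norm_addHaar] at hφi
    rw [finrank_euclideanSpace_fin] at hφi ⊢
    obtain ⟨n, rfl⟩ : ∃ n, N = n + 3 := ⟨N - 3, by omega⟩
    set c := cN (n + 3) with hcdef
    have hF := integral_Ioi_of_hasDerivAt_of_tendsto (a := 0) (m := 0)
      (f := fun r : ℝ => r ^ (n + 3) * ((1 + r ^ 2 / c) ^ (n + 2))⁻¹)
      (f' := fun y : ℝ => y ^ (n + 3 - 1) • φ y) ?_ ?_ hφi ?_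
    · rw [hF]; simp
    · refine ContinuousAt.continuousWithinAt ?_
      refine ContinuousAt.mul (by fun_prop) (ContinuousAt.inv₀ (by fun_prop) (by positivity))
    · intro r hr
      have hq : (1 + r ^ 2 / c) ≠ 0 := by positivity
      have hd : HasDerivAt (fun r : ℝ => 1 + r ^ 2 / c) (2 * r / c) r := by
        simpa using (((hasDerivAt_id r).pow 2).div_const c).const_add 1
      have h1 := (hasDerivAt_pow (n + 3) r).mul ((hd.pow (n + 2)).inv (pow_ne_zero _ hq))
      refine h1.congr_deriv ?_
      have hcc : c = ((n : ℝ) + 3) * ((n : ℝ) + 1) := by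
        rw [hcdef, cN]; push_cast; ring
      simp only [φ, smul_eq_mul, Pi.inv_apply, Pi.pow_apply]
      rw [← hcdef]
      have hn1 : (n : ℝ) + 3 ≠ 0 := by positivity
      have hn2 : (n : ℝ) + 1 ≠ 0 := by positivity
      simp only [show n + 3 - 1 = n + 2 by omega, show n + 2 - 1 = n + 1 by omega]
      push_cast
      generalize hQ : 1 + r ^ 2 / c = Q at *
      have hr2 : r ^ 2 = (Q - 1) * c := by rw [← hQ]; field_simp; ring
      have hcne : c ≠ 0 := by positivity
      have e1 : r ^ 2 / ((n : ℝ) + 3) = (Q - 1) * (n + 1) := by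
        rw [hr2, hcc]; field_simp
      have e2 : r * (2 * r / c) = 2 * (Q - 1) := by
        rw [show r * (2 * r / c) = 2 * r ^ 2 / c by ring, hr2]; field_simp
      rw [e1]
      have e3 : r ^ (n + 3) * (-(((n : ℝ) + 2) * Q ^ (n + 1) * (2 * r / c)) / (Q ^ (n + 2)) ^ 2)
          = r ^ (n + 2) * (-(((n : ℝ) + 2) * Q ^ (n + 1) * (2 * (Q - 1))) / (Q ^ (n + 2)) ^ 2) := by
        rw [← e2]; ring
      rw [e3]
      field_simp
      ring
    · have hlim : Tendsto (fun r : ℝ => c ^ (n + 2) * r⁻¹) atTop (nhds 0) := by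
        simpa using tendsto_inv_atTop_zero.const_mul (c ^ (n + 2))
      refine squeeze_zero' (Filter.eventually_atTop.2 ⟨1, fun r hr => ?_⟩)
        (Filter.eventually_atTop.2 ⟨1, fun r hr => ?_⟩) hlim
      · have : 0 < r := by linarith
        positivity
      · have hr0 : 0 < r := by linarith
        have h1 : (r ^ 2 / c) ^ (n + 2) ≤ (1 + r ^ 2 / c) ^ (n + 2) :=
          pow_le_pow_left₀ (by positivity) (by linarith) _
        have h2 : ((1 + r ^ 2 / c) ^ (n + 2))⁻¹ ≤ ((r ^ 2 / c) ^ (n + 2))⁻¹ :=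
          inv_anti₀ (by positivity) h1
        calc r ^ (n + 3) * ((1 + r ^ 2 / c) ^ (n + 2))⁻¹
            ≤ r ^ (n + 3) * ((r ^ 2 / c) ^ (n + 2))⁻¹ := by gcongr
          _ = c ^ (n + 2) * (r ^ (n + 1))⁻¹ := by
            rw [div_pow, inv_div]
            field_simp
            ring
          _ ≤ c ^ (n + 2) * r⁻¹ := by
            gcongr
            exact le_self_pow₀ hr (by omega)
  have e : ∫ x : EN N, φ ‖x‖ = N * (∫ x : EN N, gN N x) - (1 / (N : ℝ)) * AN N := by
    rw [AN, ← integral_const_mul, ← integral_const_mul,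
      ← integral_sub ((gN_int hN).const_mul _) ((gN_int_sq hN).const_mul _)]
    refine integral_congr_ae (Eventually.of_forall fun x => ?_)
    simp only [φ, gN]; ring
  rw [hφ0] at e
  field_simp at e ⊢
  linarith

lemma moment_off {N : ℕ} {i j : Fin N} (hij : i ≠ j) :
    ∫ x : EN N, (x i * x j) * gN N x = 0 := by
  let R : EN N ≃ₗᵢ[ℝ] EN N := LinearIsometryEquiv.piLpCongrRight 2
    (fun k => if k = i then LinearIsometryEquiv.neg ℝ else LinearIsometryEquiv.refl ℝ ℝ)
  have hR := R.measurePreserving.integral_comp R.toHomeomorph.measurableEmbedding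
    (fun x : EN N => (x i * x j) * gN N x)
  have h1 : ∀ x, (R x) i = - x i := fun x => by simp [R]
  have h2 : ∀ x, (R x) j = x j := fun x => by simp [R, hij.symm]
  have h3 : ∀ x, gN N (R x) = gN N x := fun x => by simp [gN]
  simp only [h1, h2, h3, neg_mul, integral_neg] at hR
  linarith

lemma moment_eq {N : ℕ} (i j : Fin N) :
    ∫ x : EN N, (x i * x i) * gN N x = ∫ x : EN N, (x j * x j) * gN N x := by
  let R : EN N ≃ₗᵢ[ℝ] EN N := LinearIsometryEquiv.piLpCongrLeft 2 ℝ ℝ (Equiv.swap i j)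
  have hR := R.measurePreserving.integral_comp R.toHomeomorph.measurableEmbedding
    (fun x : EN N => (x i * x i) * gN N x)
  have h1 : ∀ x, (R x) i = x j := fun x => by
    simp [R, LinearIsometryEquiv.piLpCongrLeft_apply]
  have h3 : ∀ x, gN N (R x) = gN N x := fun x => by simp [gN]
  simp only [h1, h3] at hR
  exact hR.symm

lemma moment_diag {N : ℕ} (hN : 3 ≤ N) (i : Fin N) :
    ∫ x : EN N, (x i * x i) * gN N x = AN N / N := by
  have hN0 : (N : ℝ) ≠ 0 := by positivity
  have : AN N = ∑ j : Fin N, ∫ x : EN N, (x j * x j) * gN N x := by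
    rw [← integral_finsetSum _ fun j _ => gN_int_coord hN j j, AN]
    refine integral_congr_ae (Eventually.of_forall fun x => ?_)
    simp only [EuclideanSpace.real_norm_sq_eq, Finset.sum_mul]
    simp only [pow_two]
  rw [this, Finset.sum_congr rfl fun j _ => moment_eq j i]
  simp
  field_simp

lemma moment {N : ℕ} (hN : 3 ≤ N) (i j : Fin N) :
    ∫ x : EN N, (x i * x j) * gN N x = if i = j then AN N / N else 0 := by
  split_ifs with h
  · subst h; exact moment_diag hN i
  · exact moment_off h

/-- diagonal linear map -/
def TD {N : ℕ} (d : Fin N → ℝ) : EN N →ₗ[ℝ] EN N where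
  toFun x := WithLp.toLp 2 fun i => d i * x i
  map_add' x y := by ext i; simp [mul_add]
  map_smul' a x := by ext i; simp; ring

lemma TD_apply {N : ℕ} (d : Fin N → ℝ) (x : EN N) (i : Fin N) : TD d x i = d i * x i := rfl

lemma TD_det {N : ℕ} (d : Fin N → ℝ) : LinearMap.det (TD d) = ∏ i, d i := by
  rw [← LinearMap.det_toMatrix (EuclideanSpace.basisFun (Fin N) ℝ).toBasis, ← Matrix.det_diagonal]
  congr 1
  ext i j
  simp [LinearMap.toMatrix_apply, TD_apply, Matrix.diagonal_apply]

lemma TD_cont {N : ℕ} (d : Fin N → ℝ) : Continuous (TD d) := LinearMap.continuous_of_finiteDimensional _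

lemma TD_integral {N : ℕ} (d : Fin N → ℝ) (hd : ∏ i, d i ≠ 0) {f : EN N → ℝ} (hf : Continuous f) :
    ∫ x, f (TD d x) = |(∏ i, d i)⁻¹| * ∫ x, f x := by
  rw [← integral_map (TD_cont d).aemeasurable hf.aestronglyMeasurable,
    Measure.map_linearMap_addHaar_eq_smul_addHaar volume (by rwa [TD_det]), integral_smul_measure,
    TD_det, ENNReal.toReal_ofReal (abs_nonneg _), smul_eq_mul]

lemma TD_integrable {N : ℕ} (d : Fin N → ℝ) (hd : ∏ i, d i ≠ 0) {f : EN N → ℝ} (hf : Continuous f)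
    (hi : Integrable f) : Integrable fun x => f (TD d x) := by
  have : Integrable f (Measure.map (TD d) volume) := by
    rw [Measure.map_linearMap_addHaar_eq_smul_addHaar volume (by rwa [TD_det])]
    exact hi.smul_measure ENNReal.ofReal_ne_top
  exact (integrable_map_measure hf.aestronglyMeasurable (TD_cont d).aemeasurable).1 this

/-- dilation factors -/
def dd {N : ℕ} (i0 : Fin N) (γ : ℝ) (i : Fin N) : ℝ := if i = i0 then γ else 1

lemma dd_prod {N : ℕ} (i0 : Fin N) (γ : ℝ) : ∏ i, dd i0 γ i = γ := by
  simp [dd]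

lemma dd_norm {N : ℕ} (i0 : Fin N) (γ : ℝ) (x : EN N) :
    ‖TD (dd i0 γ) x‖ ^ 2 = ‖x‖ ^ 2 - x i0 ^ 2 + γ ^ 2 * x i0 ^ 2 := by
  rw [EuclideanSpace.real_norm_sq_eq, EuclideanSpace.real_norm_sq_eq,
    ← Finset.add_sum_erase _ _ (Finset.mem_univ i0),
    ← Finset.add_sum_erase (a := i0) _ (fun i => x i ^ 2) (Finset.mem_univ i0)]
  have : ∑ i ∈ Finset.univ.erase i0, (TD (dd i0 γ) x) i ^ 2
      = ∑ i ∈ Finset.univ.erase i0, x i ^ 2 := by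
    refine Finset.sum_congr rfl fun i hi => ?_
    rw [TD_apply, dd, if_neg (Finset.ne_of_mem_erase hi), one_mul]
  rw [this, TD_apply, dd, if_pos rfl]
  ring

def QN {N : ℕ} (i0 : Fin N) (γ : ℝ) (x : EN N) : ℝ := 1 + ‖TD (dd i0 γ) x‖ ^ 2 / cN N

lemma QN_pos {N : ℕ} (hN : 3 ≤ N) (i0 : Fin N) (γ : ℝ) (x : EN N) : 0 < QN i0 γ x := by
  have := cN_ge hN
  unfold QN; positivity

def HN {N : ℕ} (i0 : Fin N) (γ : ℝ) (x : EN N) : ℝ := QN i0 γ x ^ (-((N : ℝ) / 2))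

lemma HN_sq {N : ℕ} (hN : 3 ≤ N) (i0 : Fin N) (γ : ℝ) (x : EN N) :
    HN i0 γ x * HN i0 γ x = gN N (TD (dd i0 γ) x) := by
  have h := QN_pos hN i0 γ x
  rw [HN, ← Real.rpow_add h, show -((N : ℝ) / 2) + -((N : ℝ) / 2) = -(N : ℝ) by ring,
    Real.rpow_neg h.le, Real.rpow_natCast]
  rfl

/-- hypotheses relating `ℓ` and `γ` -/
lemma Wl_base {N : ℕ} (hN : 3 ≤ N) (i0 : Fin N) (hi0 : (i0 : ℕ) = 0) (ℓ γ t : ℝ)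
    (hγ : γ ^ 2 * (1 - ℓ ^ 2) = 1) (x : EN N) :
    1 + (firstCoord x - t * ℓ) ^ 2 / ((N : ℝ) * ((N : ℝ) - 2) * (1 - ℓ ^ 2))
     + (‖x‖ ^ 2 - firstCoord x ^ 2) / ((N : ℝ) * ((N : ℝ) - 2))
    = 1 + γ ^ 2 * (x i0 - t * ℓ) ^ 2 / cN N + (‖x‖ ^ 2 - x i0 ^ 2) / cN N := by
  have hf : firstCoord x = x i0 := by
    have h0 : 0 < N := by omega
    have hi : (⟨0, h0⟩ : Fin N) = i0 := Fin.ext hi0.symm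
    rw [firstCoord, dif_pos h0, hi]
  have hc := cN_ge hN
  have hc0 : cN N ≠ 0 := by positivity
  have hl : 1 - ℓ ^ 2 ≠ 0 := by
    intro h; rw [h] at hγ; simp at hγ
  rw [hf]
  change 1 + (x i0 - t * ℓ) ^ 2 / (cN N * (1 - ℓ ^ 2)) + (‖x‖ ^ 2 - x i0 ^ 2) / cN N = _
  congr 2
  rw [div_eq_div_iff (by positivity) hc0]
  linear_combination (-(x i0 - t * ℓ) ^ 2 * cN N) * hγ

lemma Wl_eq_s5 {N : ℕ} (hN : 3 ≤ N) (i0 : Fin N) (hi0 : (i0 : ℕ) = 0) (ℓ γ : ℝ)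
    (hγ : γ ^ 2 * (1 - ℓ ^ 2) = 1) :
    Wl N ℓ 0 = fun x => QN i0 γ x ^ (-(((N : ℝ) - 2) / 2)) := by
  funext x
  rw [Wl, Wl_base hN i0 hi0 ℓ γ 0 hγ, QN, dd_norm]
  congr 1
  ring

lemma dt_eq {N : ℕ} (hN : 3 ≤ N) (i0 : Fin N) (hi0 : (i0 : ℕ) = 0) (ℓ γ : ℝ)
    (hγ : γ ^ 2 * (1 - ℓ ^ 2) = 1) (x : EN N) :
    dtWl N ℓ 0 x = ℓ / N * HN i0 γ x * (γ ^ 2 * x i0) := by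
  have hc := cN_ge hN
  have h3 : (3 : ℝ) ≤ N := by exact_mod_cast hN
  have hQ := QN_pos hN i0 γ x
  unfold dtWl Wl
  simp only [Wl_base hN i0 hi0 ℓ γ _ hγ]
  have hd : HasDerivAt (fun s : ℝ => 1 + γ ^ 2 * (x i0 - s * ℓ) ^ 2 / cN N
      + (‖x‖ ^ 2 - x i0 ^ 2) / cN N) (-(2 * γ ^ 2 * x i0 * ℓ / cN N)) 0 := by
    have h1 : HasDerivAt (fun s : ℝ => x i0 - s * ℓ) (-ℓ) 0 := by
      simpa using ((hasDerivAt_id (0 : ℝ)).mul_const ℓ).const_sub (x i0)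
    have h2 := ((((h1.pow 2).const_mul (γ ^ 2)).div_const (cN N)).const_add 1).add_const
      ((‖x‖ ^ 2 - x i0 ^ 2) / cN N)
    refine h2.congr_deriv ?_
    simp; ring
  have hb : 1 + γ ^ 2 * (x i0 - 0 * ℓ) ^ 2 / cN N + (‖x‖ ^ 2 - x i0 ^ 2) / cN N = QN i0 γ x := by
    rw [QN, dd_norm]; ring
  have h := (hd.rpow_const (p := -(((N : ℝ) - 2) / 2)) (Or.inl (by rw [hb]; exact hQ.ne'))).deriv
  rw [h, hb, show -(((N : ℝ) - 2) / 2) - 1 = -((N : ℝ) / 2) by ring]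
  change _ * _ * HN i0 γ x = _
  unfold cN
  have : (N : ℝ) - 2 ≠ 0 := by linarith
  field_simp

lemma grad_eq {N : ℕ} (hN : 3 ≤ N) (i0 : Fin N) (hi0 : (i0 : ℕ) = 0) (ℓ γ : ℝ)
    (hγ : γ ^ 2 * (1 - ℓ ^ 2) = 1) (x : EN N) (i : Fin N) :
    gradient (Wl N ℓ 0) x i = -(1 / N) * HN i0 γ x * (dd i0 γ i ^ 2 * x i) := by
  have hc := cN_ge hN
  have h3 : (3 : ℝ) ≤ N := by exact_mod_cast hN
  have hQ := QN_pos hN i0 γ x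
  have e : gradient (Wl N ℓ 0) x i = fderiv ℝ (Wl N ℓ 0) x (EuclideanSpace.single i 1) := by
    rw [← inner_gradient_left, EuclideanSpace.inner_single_right]; simp
  let L : EN N →L[ℝ] EN N := LinearMap.toContinuousLinearMap (TD (dd i0 γ))
  have h1 : HasFDerivAt (fun y : EN N => ‖L y‖ ^ 2) _ x := L.hasFDerivAt.norm_sq
  have h2 := ((h1.mul_const (cN N)⁻¹).const_add 1)
  have h3' := h2.rpow_const (p := -(((N : ℝ) - 2) / 2))
    (Or.inl (by rw [← div_eq_mul_inv]; exact hQ.ne'))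
  have hb : 1 + ‖L x‖ ^ 2 * (cN N)⁻¹ = QN i0 γ x := by rw [← div_eq_mul_inv]; rfl
  have hf : (fun y : EN N => (1 + ‖L y‖ ^ 2 * (cN N)⁻¹) ^ (-(((N : ℝ) - 2) / 2))) = Wl N ℓ 0 := by
    rw [Wl_eq_s5 hN i0 hi0 ℓ γ hγ]
    funext y
    rw [← div_eq_mul_inv]; rfl
  rw [hb, hf, show -(((N : ℝ) - 2) / 2) - 1 = -((N : ℝ) / 2) by ring] at h3'
  change HasFDerivAt _ ((_ * HN i0 γ x) • _) _ at h3'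
  have hs : L (EuclideanSpace.single i 1) = EuclideanSpace.single i (dd i0 γ i) := by
    ext j
    change dd i0 γ j * _ = _
    by_cases h : j = i
    · subst h; simp
    · simp [h]
  have hLx : (L x) i = dd i0 γ i * x i := rfl
  rw [e, h3'.fderiv]
  simp [hs, EuclideanSpace.inner_single_right, hLx]
  unfold cN
  have : (N : ℝ) - 2 ≠ 0 := by linarith
  field_simp

lemma moment_T {N : ℕ} (hN : 3 ≤ N) (i0 : Fin N) (γ : ℝ) (hγ : 0 < γ) (i j : Fin N) :
    ∫ x : EN N, (TD (dd i0 γ) x i * TD (dd i0 γ) x j) * gN N (TD (dd i0 γ) x)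
      = γ⁻¹ * if i = j then AN N / N else 0 := by
  have hg := gN_cont hN
  rw [TD_integral (f := fun x : EN N => x i * x j * gN N x) (dd i0 γ)
    (by rw [dd_prod]; exact hγ.ne') (by fun_prop), dd_prod, moment hN, abs_of_pos (by positivity)]

lemma moment_T_int {N : ℕ} (hN : 3 ≤ N) (i0 : Fin N) (γ : ℝ) (hγ : 0 < γ) (i j : Fin N) :
    Integrable fun x : EN N => (TD (dd i0 γ) x i * TD (dd i0 γ) x j) * gN N (TD (dd i0 γ) x) := by
  have hg := gN_cont hN
  exact TD_integrable (f := fun x : EN N => x i * x j * gN N x) (dd i0 γ)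
    (by rw [dd_prod]; exact hγ.ne') (by fun_prop) (gN_int_coord hN i j)

lemma prod_eq {N : ℕ} (hN : 3 ≤ N) (i0 : Fin N) (hi0 : (i0 : ℕ) = 0) (ℓ γ : ℝ)
    (hγ : γ ^ 2 * (1 - ℓ ^ 2) = 1) (x : EN N) (i : Fin N) :
    (dtWl N ℓ 0 x • gradient (Wl N ℓ 0) x) i = -(ℓ / N ^ 2 * γ * dd i0 γ i) *
      ((TD (dd i0 γ) x i0 * TD (dd i0 γ) x i) * gN N (TD (dd i0 γ) x)) := by
  rw [← HN_sq hN, PiLp.smul_apply, dt_eq hN i0 hi0 ℓ γ hγ, grad_eq hN i0 hi0 ℓ γ hγ, TD_apply,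
    TD_apply, smul_eq_mul, show dd i0 γ i0 = γ by simp [dd]]
  ring

lemma momentum_eq {N : ℕ} (hN : 3 ≤ N) (i0 : Fin N) (hi0 : (i0 : ℕ) = 0) (ℓ γ : ℝ)
    (hγ : γ ^ 2 * (1 - ℓ ^ 2) = 1) (hγ0 : 0 < γ) :
    (∫ x, dtWl N ℓ 0 x • gradient (Wl N ℓ 0) x)
      = (-(ℓ * γ * (AN N / N ^ 3))) • EuclideanSpace.single i0 (1 : ℝ) := by
  have h3 : (3 : ℝ) ≤ N := by exact_mod_cast hN
  ext i
  rw [eval_integral_piLp]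
  · simp only [prod_eq hN i0 hi0 ℓ γ hγ]
    rw [integral_const_mul, moment_T hN i0 γ hγ0]
    by_cases h : i = i0
    · subst h
      simp [dd]
      field_simp
    · simp [h, Ne.symm h]
  · intro j
    simp only [prod_eq hN i0 hi0 ℓ γ hγ]
    exact (moment_T_int hN i0 γ hγ0 i0 j).const_mul _

lemma energy_eq {N : ℕ} (hN : 3 ≤ N) (i0 : Fin N) (hi0 : (i0 : ℕ) = 0) (ℓ γ : ℝ)
    (hγ : γ ^ 2 * (1 - ℓ ^ 2) = 1) (hγ0 : 0 < γ) :
    energy N (Wl N ℓ 0) (dtWl N ℓ 0) = γ * (AN N / N ^ 3) := by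
  have h3 : (3 : ℝ) ≤ N := by exact_mod_cast hN
  have hN2 : (N : ℝ) - 2 ≠ 0 := by linarith
  have I1 : ∫ x, dtWl N ℓ 0 x ^ 2 = ℓ ^ 2 / N ^ 2 * γ ^ 2 * (γ⁻¹ * (AN N / N)) := by
    have : ∀ x, dtWl N ℓ 0 x ^ 2 = ℓ ^ 2 / N ^ 2 * γ ^ 2 *
      ((TD (dd i0 γ) x i0 * TD (dd i0 γ) x i0) * gN N (TD (dd i0 γ) x)) := fun x => by
      rw [← HN_sq hN, dt_eq hN i0 hi0 ℓ γ hγ, TD_apply, show dd i0 γ i0 = γ by simp [dd]]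
      ring
    simp only [this]
    rw [integral_const_mul, moment_T hN i0 γ hγ0, if_pos rfl]
  have I2 : ∫ x, ‖gradient (Wl N ℓ 0) x‖ ^ 2
      = (1 / N ^ 2) * (γ ^ 2 + (N - 1)) * (γ⁻¹ * (AN N / N)) := by
    have : ∀ x, ‖gradient (Wl N ℓ 0) x‖ ^ 2 = ∑ i, (1 / N ^ 2) * dd i0 γ i ^ 2 *
      ((TD (dd i0 γ) x i * TD (dd i0 γ) x i) * gN N (TD (dd i0 γ) x)) := fun x => by
      rw [EuclideanSpace.real_norm_sq_eq]
      refine Finset.sum_congr rfl fun i _ => ?_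
      rw [← HN_sq hN, grad_eq hN i0 hi0 ℓ γ hγ, TD_apply]
      ring
    simp only [this]
    rw [integral_finsetSum _ fun i _ => (moment_T_int hN i0 γ hγ0 i i).const_mul _]
    simp only [integral_const_mul, moment_T hN i0 γ hγ0, if_true]
    rw [← Finset.sum_mul, ← Finset.mul_sum]
    congr 2
    rw [← Finset.add_sum_erase _ _ (Finset.mem_univ i0)]
    congr 1
    · simp [dd]
    · rw [Finset.sum_congr rfl (g := fun _ => (1 : ℝ)) fun i hi => by
        rw [dd, if_neg (Finset.ne_of_mem_erase hi), one_pow]]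
      simp [Finset.card_erase_of_mem]
      rw [Nat.cast_sub (by omega)]; simp
  have I3 : ∫ x, |Wl N ℓ 0 x| ^ (2 * (N : ℝ) / ((N : ℝ) - 2)) = γ⁻¹ * (AN N / N ^ 2) := by
    have : ∀ x, |Wl N ℓ 0 x| ^ (2 * (N : ℝ) / ((N : ℝ) - 2)) = gN N (TD (dd i0 γ) x) := fun x => by
      have hQ := QN_pos hN i0 γ x
      rw [Wl_eq_s5 hN i0 hi0 ℓ γ hγ, abs_of_pos (by positivity), ← Real.rpow_mul hQ.le,
        show -(((N : ℝ) - 2) / 2) * (2 * (N : ℝ) / ((N : ℝ) - 2)) = -(N : ℝ) by field_simp,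
        Real.rpow_neg hQ.le, Real.rpow_natCast]
      rfl
    simp only [this]
    rw [TD_integral (dd i0 γ) (by rw [dd_prod]; exact hγ0.ne') (gN_cont hN), dd_prod, pohozaev_s5 hN,
      abs_of_pos (by positivity)]
  rw [energy, I1, I2, I3]
  have hl : ℓ ^ 2 = 1 - 1 / γ ^ 2 := by field_simp; linarith
  rw [hl]
  field_simp
  ring

lemma W_eq {N : ℕ} : W N = Wl N 0 0 := by
  funext x
  simp only [W, Wl]
  congr 1
  ring

lemma energy_W {N : ℕ} (hN : 3 ≤ N) (i0 : Fin N) (hi0 : (i0 : ℕ) = 0) :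
    energy N (W N) 0 = AN N / N ^ 3 := by
  have h := energy_eq hN i0 hi0 0 1 (by norm_num) one_pos
  have : dtWl N 0 0 = 0 := by
    funext x
    rw [dt_eq hN i0 hi0 0 1 (by norm_num)]; simp
  rw [this, one_mul] at h
  rw [W_eq, h]

/-- Claim 2.3, fourth line: the momentum of the solitary wave `W_ℓ`. -/
theorem stmt5 (N : ℕ) (hN : N = 3 ∨ N = 4 ∨ N = 5)
    (ℓ : ℝ) (hℓ : ℓ ∈ Set.Ioo (-1 : ℝ) 1) :
    (∫ x, dtWl N ℓ 0 x • gradient (Wl N ℓ 0) x)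
        = (-(ℓ / Real.sqrt (1 - ℓ ^ 2)) * energy N (W N) 0)
            • EuclideanSpace.single (⟨0, by omega⟩ : Fin N) (1 : ℝ)
      ∧ (∫ x, dtWl N ℓ 0 x • gradient (Wl N ℓ 0) x)
        = (-ℓ * energy N (Wl N ℓ 0) (dtWl N ℓ 0))
            • EuclideanSpace.single (⟨0, by omega⟩ : Fin N) (1 : ℝ) := by
  have hN3 : 3 ≤ N := by omega
  have hl : 0 < 1 - ℓ ^ 2 := by nlinarith [hℓ.1, hℓ.2]
  have hγ0 : 0 < (Real.sqrt (1 - ℓ ^ 2))⁻¹ := inv_pos.2 (Real.sqrt_pos.2 hl)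
  have hγ : (Real.sqrt (1 - ℓ ^ 2))⁻¹ ^ 2 * (1 - ℓ ^ 2) = 1 := by
    rw [inv_pow, Real.sq_sqrt hl.le, inv_mul_cancel₀ hl.ne']
  rw [momentum_eq hN3 ⟨0, by omega⟩ rfl ℓ _ hγ hγ0, energy_W hN3 ⟨0, by omega⟩ rfl,
    energy_eq hN3 ⟨0, by omega⟩ rfl ℓ _ hγ hγ0]
  constructor
  · congr 1; ring
  · congr 1; ring

end
end

section
/- Let N ∈ {3,4,5}. Let f : ℝ^N → ℝ be twice continuously differentiable with ∇f ∈ L²(ℝ^N) and f ∈ L^{2N/(N−2)}(ℝ^N), satisfying pointwise the degenerate elliptic equation Σ_{j=2}^N ∂²_{x_j}f + |f|^{4/(N−2)} f = 0 on ℝ^N (no second derivative in the x₁ direction). Then f is identically zero. -/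
open MeasureTheory Metric Filter Set

noncomputable section

lemma aux_cutoff (N : ℕ) : ∃ C : ℝ, 0 ≤ C ∧ ∀ R : ℝ, 0 < R →
    ∃ φ : EuclideanSpace ℝ (Fin N) → ℝ, ContDiff ℝ 1 φ ∧ HasCompactSupport φ ∧
      (∀ x, 0 ≤ φ x) ∧ (∀ x, φ x ≤ 1) ∧ (∀ x, ‖x‖ ≤ R → φ x = 1) ∧
      (∀ x, ‖fderiv ℝ φ x‖ ≤ C / R) ∧
      (∀ x, fderiv ℝ φ x ≠ 0 → R ≤ ‖x‖ ∧ ‖x‖ ≤ 2 * R) := by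
  let χ : ContDiffBump (0 : EuclideanSpace ℝ (Fin N)) := ⟨1, 2, one_pos, one_lt_two⟩
  have hχ : ContDiff ℝ 1 χ := χ.contDiff
  have hcs : HasCompactSupport (fderiv ℝ χ) := χ.hasCompactSupport.fderiv ℝ
  obtain ⟨C, hC⟩ := hcs.exists_bound_of_continuous (hχ.continuous_fderiv one_ne_zero)
  refine ⟨C, (norm_nonneg _).trans (hC 0), fun R hR => ?_⟩
  have hfd : ∀ x, fderiv ℝ (fun x => χ (R⁻¹ • x)) x = R⁻¹ • fderiv ℝ χ (R⁻¹ • x) := by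
    intro x
    exact fderiv_comp_smul R⁻¹
  have hnorm : ∀ x : EuclideanSpace ℝ (Fin N), ‖R⁻¹ • x‖ = ‖x‖ / R := by
    intro x
    rw [norm_smul, Real.norm_of_nonneg (by positivity)]; field_simp
  refine ⟨fun x => χ (R⁻¹ • x), hχ.comp (contDiff_const_smul _), ?_, fun x => χ.nonneg,
    fun x => χ.le_one, ?_, ?_, ?_⟩
  · exact χ.hasCompactSupport.comp_smul (inv_ne_zero hR.ne')
  · intro x hx
    apply χ.one_of_mem_closedBall
    rw [mem_closedBall_zero_iff, hnorm]
    exact (div_le_one hR).2 hx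
  · intro x
    rw [hfd, norm_smul, Real.norm_of_nonneg (by positivity), div_eq_inv_mul]
    gcongr
    exact hC _
  · intro x hx
    rw [hfd] at hx
    have h0 : fderiv ℝ χ (R⁻¹ • x) ≠ 0 := fun h => hx (by rw [h, smul_zero])
    constructor
    · by_contra! hlt
      apply h0
      have : (χ : EuclideanSpace ℝ (Fin N) → ℝ) =ᶠ[nhds (R⁻¹ • x)] fun _ => (1 : ℝ) := by
        apply χ.eventuallyEq_one_of_mem_ball
        rw [mem_ball_zero_iff, hnorm]
        exact (div_lt_one hR).2 hlt
      rw [this.fderiv_eq]; simp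
    · have := support_fderiv_subset ℝ (f := (χ : EuclideanSpace ℝ (Fin N) → ℝ)) h0
      rw [χ.tsupport_eq, mem_closedBall_zero_iff, hnorm, div_le_iff₀ hR] at this
      exact this

lemma aux_ibp {N : ℕ} (φ B : EuclideanSpace ℝ (Fin N) → ℝ) (hφ : ContDiff ℝ 1 φ)
    (hc : HasCompactSupport φ) (hB : ContDiff ℝ 1 B) (v : EuclideanSpace ℝ (Fin N)) :
    Integrable (fun x => φ x * fderiv ℝ B x v) ∧ Integrable (fun x => fderiv ℝ φ x v * B x) ∧
    ∫ x, φ x * fderiv ℝ B x v = - ∫ x, fderiv ℝ φ x v * B x := by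
  have c1 : Continuous (fun x => fderiv ℝ B x v) :=
    (hB.continuous_fderiv one_ne_zero).clm_apply continuous_const
  have c2 : Continuous (fun x => fderiv ℝ φ x v) :=
    (hφ.continuous_fderiv one_ne_zero).clm_apply continuous_const
  have s2 : HasCompactSupport (fun x => fderiv ℝ φ x v) := hc.fderiv_apply ℝ v
  have i1 : Integrable (fun x => φ x * fderiv ℝ B x v) :=
    (hφ.continuous.mul c1).integrable_of_hasCompactSupport hc.mul_right
  have i2 : Integrable (fun x => fderiv ℝ φ x v * B x) :=
    (c2.mul hB.continuous).integrable_of_hasCompactSupport s2.mul_right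
  have i3 : Integrable (fun x => φ x * B x) :=
    (hφ.continuous.mul hB.continuous).integrable_of_hasCompactSupport hc.mul_right
  exact ⟨i1, i2, integral_mul_fderiv_eq_neg_fderiv_mul_of_integrable i2 i1 i3
    (fun x _ => hφ.differentiable one_ne_zero x) (fun x _ => hB.differentiable one_ne_zero x)⟩

lemma aux_tail {N : ℕ} (h : EuclideanSpace ℝ (Fin N) → ℝ) (hi : Integrable h) :
    Tendsto (fun n : ℕ => ∫ x in {x | (n : ℝ) ≤ ‖x‖}, h x) atTop (nhds 0) := by
  have := tendsto_setIntegral_of_antitone (μ := volume) (f := h)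
    (s := fun n : ℕ => {x : EuclideanSpace ℝ (Fin N) | (n : ℝ) ≤ ‖x‖})
    (fun n => measurableSet_le measurable_const measurable_norm)
    (fun n m hnm x (hx : (m : ℝ) ≤ ‖x‖) =>
      show (n : ℝ) ≤ ‖x‖ from le_trans (Nat.cast_le.2 hnm) hx) ⟨0, hi.integrableOn⟩
  have he : (⋂ n : ℕ, {x : EuclideanSpace ℝ (Fin N) | (n : ℝ) ≤ ‖x‖}) = ∅ := by
    ext x
    simp only [mem_iInter, mem_ofPred_eq, mem_empty_iff_false, iff_false, not_forall, not_le]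
    exact exists_nat_gt _
  rw [he] at this
  simpa using this

lemma aux_young (N : ℕ) (hN : 3 ≤ N) (ε : ℝ) (hε : 0 < ε) : ∃ K : ℝ, 0 ≤ K ∧
    ∀ t b : ℝ, 0 ≤ t → 0 ≤ b →
      t ^ 2 * b ^ 2 ≤ ε * t ^ N + K * b ^ (2 * (N : ℝ) / ((N : ℝ) - 2)) := by
  have hN' : (3 : ℝ) ≤ N := by exact_mod_cast hN
  have hN2 : (0 : ℝ) < (N : ℝ) - 2 := by linarith
  set s : ℝ := 2 / ((N : ℝ) - 2) with hs
  have hs0 : 0 < s := by positivity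
  refine ⟨(ε ^ s)⁻¹, by positivity, fun t b ht hb => ?_⟩
  have hq : b ^ (2 * (N : ℝ) / ((N : ℝ) - 2)) = (b ^ 2) ^ s * b ^ 2 := by
    rcases hb.eq_or_lt with rfl | hb
    · rw [Real.zero_rpow (by positivity)]; simp
    · rw [← Real.rpow_natCast b 2, ← Real.rpow_mul hb.le, ← Real.rpow_add hb]
      congr 1; rw [hs]; push_cast; field_simp; ring
  rw [hq]
  obtain ⟨m, rfl⟩ : ∃ m, N = m + 2 := ⟨N - 2, by omega⟩
  have hm : (0 : ℝ) < m := by push_cast at hN2; linarith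
  have hsm : (t ^ m) ^ s = t ^ 2 := by
    rw [← Real.rpow_natCast t m, ← Real.rpow_mul ht, ← Real.rpow_natCast t 2]
    congr 1; rw [hs]; push_cast; rw [add_sub_cancel_right]; field_simp
  rcases le_total (b ^ 2) (ε * t ^ m) with h | h
  · have : t ^ 2 * b ^ 2 ≤ ε * t ^ (m + 2) := by
      calc t ^ 2 * b ^ 2 ≤ t ^ 2 * (ε * t ^ m) := by gcongr
        _ = _ := by ring
    have h2 : 0 ≤ (ε ^ s)⁻¹ * ((b ^ 2) ^ s * b ^ 2) := by positivity
    linarith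
  · have h1 : ε ^ s * t ^ 2 ≤ (b ^ 2) ^ s := by
      rw [← hsm, ← Real.mul_rpow hε.le (by positivity)]
      exact Real.rpow_le_rpow (by positivity) h hs0.le
    have h2 : t ^ 2 ≤ (ε ^ s)⁻¹ * (b ^ 2) ^ s := by
      rw [inv_mul_eq_div, le_div_iff₀ (by positivity)]; linarith
    have h3 : t ^ 2 * b ^ 2 ≤ (ε ^ s)⁻¹ * (b ^ 2) ^ s * b ^ 2 := by gcongr
    have h4 : 0 ≤ ε * t ^ (m + 2) := by positivity
    linarith

/-- First partial derivative. -/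
def auxD {N : ℕ} (f : EuclideanSpace ℝ (Fin N) → ℝ) (j : Fin N)
    (x : EuclideanSpace ℝ (Fin N)) : ℝ :=
  fderiv ℝ f x (EuclideanSpace.single j 1)

/-- The Pohozaev vector field. -/
def auxB {N : ℕ} (f : EuclideanSpace ℝ (Fin N) → ℝ) (S : Finset (Fin N)) (q c : ℝ) (j : Fin N)
    (x : EuclideanSpace ℝ (Fin N)) : ℝ :=
  (∑ k ∈ S, x k * auxD f k x) * auxD f j x - x j * ((∑ k ∈ S, auxD f k x ^ 2) / 2)
    + x j * (|f x| ^ q / q) + c * (f x * auxD f j x)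

lemma auxD_contDiff {N : ℕ} {f : EuclideanSpace ℝ (Fin N) → ℝ} (hf : ContDiff ℝ 2 f) (j : Fin N) :
    ContDiff ℝ 1 (auxD f j) :=
  (hf.fderiv_right (m := 1) (by norm_num)).clm_apply contDiff_const

lemma aux_coord_contDiff {N : ℕ} (j : Fin N) :
    ContDiff ℝ 1 (fun x : EuclideanSpace ℝ (Fin N) => x j) :=
  (EuclideanSpace.proj (𝕜 := ℝ) j).contDiff

lemma aux_pow_contDiff {N : ℕ} {f : EuclideanSpace ℝ (Fin N) → ℝ} (hf : ContDiff ℝ 2 f)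
    {q : ℝ} (hq : 1 < q) : ContDiff ℝ 1 (fun x => |f x| ^ q) := by
  have := (hf.of_le (m := 1) (by norm_num)).norm_rpow hq
  simpa using this

lemma auxB_contDiff {N : ℕ} {f : EuclideanSpace ℝ (Fin N) → ℝ} (hf : ContDiff ℝ 2 f)
    (S : Finset (Fin N)) {q : ℝ} (hq : 1 < q) (c : ℝ) (j : Fin N) :
    ContDiff ℝ 1 (auxB f S q c j) := by
  have hD := auxD_contDiff hf
  have hX := aux_coord_contDiff (N := N)
  have hF := aux_pow_contDiff hf hq
  have hf1 : ContDiff ℝ 1 f := hf.of_le (by norm_num)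
  have h1 : ContDiff ℝ 1 (fun x => ∑ k ∈ S, x k * auxD f k x) :=
    ContDiff.sum fun k _ => (hX k).mul (hD k)
  have h2 : ContDiff ℝ 1 (fun x => ∑ k ∈ S, auxD f k x ^ 2) :=
    ContDiff.sum fun k _ => (hD k).pow 2
  exact (((h1.mul (hD j)).sub ((hX j).mul (h2.div_const 2))).add
    ((hX j).mul (hF.div_const q))).add (contDiff_const.mul (hf1.mul (hD j)))

lemma aux_symm {N : ℕ} {f : EuclideanSpace ℝ (Fin N) → ℝ} (hf : ContDiff ℝ 2 f)
    (x : EuclideanSpace ℝ (Fin N)) (j k : Fin N) :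
    fderiv ℝ (auxD f k) x (EuclideanSpace.single j 1)
      = fderiv ℝ (auxD f j) x (EuclideanSpace.single k 1) := by
  have hs : IsSymmSndFDerivAt ℝ f x := hf.contDiffAt.isSymmSndFDerivAt (by simp)
  have hd : DifferentiableAt ℝ (fderiv ℝ f) x :=
    (hf.fderiv_right (m := 1) (by norm_num)).differentiable one_ne_zero x
  have key : ∀ v w, fderiv ℝ (fun y => fderiv ℝ f y w) x v = fderiv ℝ (fderiv ℝ f) x v w := by
    intro v w
    rw [fderiv_clm_apply hd (differentiableAt_const w)]
    simp
  unfold auxD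
  rw [key, key]
  exact hs _ _

lemma auxB_deriv {N : ℕ} {f : EuclideanSpace ℝ (Fin N) → ℝ} (hf : ContDiff ℝ 2 f)
    (S : Finset (Fin N)) {q : ℝ} (hq : 1 < q) (c : ℝ) (j : Fin N) (hj : j ∈ S)
    (x : EuclideanSpace ℝ (Fin N)) :
    fderiv ℝ (auxB f S q c j) x (EuclideanSpace.single j 1) =
      (auxD f j x + ∑ k ∈ S, x k * fderiv ℝ (auxD f k) x (EuclideanSpace.single j 1)) * auxD f j x
      + (∑ k ∈ S, x k * auxD f k x) * d2 f j x
      - (∑ k ∈ S, auxD f k x ^ 2) / 2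
      - x j * (∑ k ∈ S, auxD f k x * fderiv ℝ (auxD f k) x (EuclideanSpace.single j 1))
      + |f x| ^ q / q + x j * (|f x| ^ (q - 2) * f x * auxD f j x)
      + c * (auxD f j x ^ 2 + f x * d2 f j x) := by
  set e : EuclideanSpace ℝ (Fin N) := EuclideanSpace.single j 1 with he
  have gen : ∀ g : EuclideanSpace ℝ (Fin N) → ℝ, ContDiff ℝ 1 g →
      HasDerivAt (fun t : ℝ => g (x + t • e)) (fderiv ℝ g x e) 0 := fun g hg =>
    ((hg.differentiable one_ne_zero x).hasFDerivAt).hasLineDerivAt e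
  have hf1 : ContDiff ℝ 1 f := hf.of_le (by norm_num)
  have hD := fun k => gen _ (auxD_contDiff hf k)
  have hX : ∀ k, HasDerivAt (fun t : ℝ => (x + t • e) k) (if k = j then 1 else 0) 0 := by
    intro k
    have := ((hasDerivAt_id (0 : ℝ)).mul_const (e k)).const_add (x k)
    have h2 : (1 : ℝ) * e k = if k = j then 1 else 0 := by
      rw [he]; simp
    rw [h2] at this
    exact this
  have hF0 := gen _ hf1
  have hF : HasDerivAt (fun t : ℝ => |f (x + t • e)| ^ q)
      (q * |f x| ^ (q - 2) * f x * fderiv ℝ f x e) 0 := by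
    have h := hasDerivAt_abs_rpow (f (x + (0 : ℝ) • e)) hq
    have := h.comp (0 : ℝ) hF0
    simp only [zero_smul, add_zero] at this
    exact this
  have h1 := HasDerivAt.fun_sum (u := S) fun k _ => (hX k).fun_mul (hD k)
  have h2 := HasDerivAt.fun_sum (u := S) fun k _ => (hD k).fun_pow 2
  have hB := (((h1.mul (hD j)).sub ((hX j).mul (h2.div_const 2))).add
    ((hX j).mul (hF.div_const q))).add ((hF0.mul (hD j)).const_mul c)
  have hB' := gen _ (auxB_contDiff hf S hq c j)
  have := hB'.unique hB
  rw [this]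
  have hq0 : q ≠ 0 := by positivity
  have hd2 : d2 f j x = fderiv ℝ (auxD f j) x e := rfl
  have hDj : fderiv ℝ f x e = auxD f j x := rfl
  have hs1 : ∑ k ∈ S, ((if k = j then (1:ℝ) else 0) * auxD f k x + x k * fderiv ℝ (auxD f k) x e)
      = auxD f j x + ∑ k ∈ S, x k * fderiv ℝ (auxD f k) x e := by
    rw [Finset.sum_add_distrib]
    simp [hj]
  have hs2 : ∑ k ∈ S, 2 * auxD f k x * fderiv ℝ (auxD f k) x e
      = 2 * ∑ k ∈ S, auxD f k x * fderiv ℝ (auxD f k) x e := by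
    rw [Finset.mul_sum]; exact Finset.sum_congr rfl fun k _ => by ring
  simp only [zero_smul, add_zero, hd2, hDj, Nat.cast_ofNat, Nat.add_one_sub_one, pow_one, hs1, hs2,
    if_true]
  field_simp
  ring

lemma aux_div {N : ℕ} {f : EuclideanSpace ℝ (Fin N) → ℝ} (hf : ContDiff ℝ 2 f)
    (S : Finset (Fin N)) {q : ℝ} (hq : 2 < q) (c : ℝ) (x : EuclideanSpace ℝ (Fin N))
    (heq : (∑ j ∈ S, d2 f j x) + |f x| ^ (q - 2) * f x = 0) :
    ∑ j ∈ S, fderiv ℝ (auxB f S q c j) x (EuclideanSpace.single j 1) =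
      (1 - (S.card : ℝ) / 2 + c) * (∑ k ∈ S, auxD f k x ^ 2)
        + ((S.card : ℝ) / q - c) * |f x| ^ q := by
  rw [Finset.sum_congr rfl fun j hj => auxB_deriv hf S (by linarith : 1 < q) c j hj x]
  set X := ∑ k ∈ S, x k * auxD f k x with hX
  set A := ∑ k ∈ S, auxD f k x ^ 2 with hA
  have hL : ∑ j ∈ S, d2 f j x = - (|f x| ^ (q - 2) * f x) := by linarith
  have hpow : |f x| ^ (q - 2) * f x * f x = |f x| ^ q := by
    rw [mul_assoc, ← pow_two, ← sq_abs, ← Real.rpow_natCast, ← Real.rpow_add_of_nonneg (abs_nonneg _)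
      (by linarith) (by norm_num)]
    congr 1; push_cast; ring
  have hsw : ∑ j ∈ S, (∑ k ∈ S, x k * fderiv ℝ (auxD f k) x (EuclideanSpace.single j 1)) * auxD f j x
     = ∑ j ∈ S, x j * (∑ k ∈ S, auxD f k x * fderiv ℝ (auxD f k) x (EuclideanSpace.single j 1)) := by
    simp only [Finset.sum_mul, Finset.mul_sum]
    rw [Finset.sum_comm]
    refine Finset.sum_congr rfl fun j _ => Finset.sum_congr rfl fun k _ => ?_
    rw [aux_symm hf x j k]; ring
  have hXs : ∑ j ∈ S, x j * (|f x| ^ (q - 2) * f x * auxD f j x) = |f x| ^ (q - 2) * f x * X := by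
    rw [hX, Finset.mul_sum]; exact Finset.sum_congr rfl fun k _ => by ring
  simp only [Finset.sum_add_distrib, Finset.sum_sub_distrib, add_mul, hsw, hXs, ← Finset.mul_sum, hL,
    Finset.sum_const, nsmul_eq_mul, ← pow_two, ← hA]
  have : f x * -(|f x| ^ (q - 2) * f x) = - |f x| ^ q := by rw [← hpow]; ring
  rw [this]
  ring

lemma auxD_le {N : ℕ} (f : EuclideanSpace ℝ (Fin N) → ℝ) (j : Fin N)
    (x : EuclideanSpace ℝ (Fin N)) : |auxD f j x| ≤ ‖fderiv ℝ f x‖ := by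
  have := (fderiv ℝ f x).le_opNorm (EuclideanSpace.single j 1)
  simpa [auxD] using this

lemma auxB_le {N : ℕ} (hN : 1 ≤ N) (f : EuclideanSpace ℝ (Fin N) → ℝ) (S : Finset (Fin N))
    {q c : ℝ} (hq : 2 < q) (hc0 : 0 ≤ c) (hc1 : c ≤ 1) (j : Fin N)
    (x : EuclideanSpace ℝ (Fin N)) {R : ℝ} (hR : 0 < R) (hx : ‖x‖ ≤ 2 * R) :
    |auxB f S q c j x| ≤ 3 * N * R * (‖fderiv ℝ f x‖ ^ 2 + |f x| ^ q)
      + |f x| * ‖fderiv ℝ f x‖ := by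
  set g := ‖fderiv ℝ f x‖ with hg
  have hg0 : 0 ≤ g := norm_nonneg _
  have hD := fun k => auxD_le f k x
  have hX : ∀ k, |x k| ≤ 2 * R := fun k => by
    have := PiLp.norm_apply_le x k
    rw [Real.norm_eq_abs] at this
    linarith
  have hF : 0 ≤ |f x| ^ q := by positivity
  have hcard : (S.card : ℝ) ≤ N := by
    have := S.card_le_univ
    rw [Fintype.card_fin] at this
    exact_mod_cast this
  have hN' : (1 : ℝ) ≤ N := by exact_mod_cast hN
  have h1 : |∑ k ∈ S, x k * auxD f k x| ≤ N * (2 * R * g) := by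
    calc _ ≤ ∑ k ∈ S, |x k * auxD f k x| := Finset.abs_sum_le_sum_abs _ _
      _ ≤ ∑ k ∈ S, 2 * R * g := Finset.sum_le_sum fun k _ => by
          rw [abs_mul]; exact mul_le_mul (hX k) (hD k) (abs_nonneg _) (by positivity)
      _ = S.card * (2 * R * g) := by simp
      _ ≤ _ := by gcongr
  have h2 : |∑ k ∈ S, auxD f k x ^ 2| ≤ N * g ^ 2 := by
    calc _ ≤ ∑ k ∈ S, |auxD f k x ^ 2| := Finset.abs_sum_le_sum_abs _ _
      _ ≤ ∑ k ∈ S, g ^ 2 := Finset.sum_le_sum fun k _ => by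
          rw [abs_pow]; exact pow_le_pow_left₀ (abs_nonneg _) (hD k) 2
      _ = S.card * g ^ 2 := by simp
      _ ≤ _ := by gcongr
  have t1 : |(∑ k ∈ S, x k * auxD f k x) * auxD f j x| ≤ N * (2 * R * g) * g := by
    rw [abs_mul]; exact mul_le_mul h1 (hD j) (abs_nonneg _) (by positivity)
  have t2 : |x j * ((∑ k ∈ S, auxD f k x ^ 2) / 2)| ≤ 2 * R * (N * g ^ 2 / 2) := by
    rw [abs_mul, abs_div, abs_two]
    exact mul_le_mul (hX j) (by gcongr) (by positivity) (by positivity)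
  have t3 : |x j * (|f x| ^ q / q)| ≤ 2 * R * (|f x| ^ q / 2) := by
    rw [abs_mul]
    refine mul_le_mul (hX j) ?_ (by positivity) (by positivity)
    rw [abs_of_nonneg (by positivity)]
    gcongr
  have t4 : |c * (f x * auxD f j x)| ≤ 1 * (|f x| * g) := by
    rw [abs_mul, abs_mul, abs_of_nonneg hc0]
    exact mul_le_mul hc1 (mul_le_mul_of_nonneg_left (hD j) (abs_nonneg _)) (by positivity) one_pos.le
  have hRF : 0 ≤ R * |f x| ^ q := by positivity
  have hNF : R * |f x| ^ q ≤ N * (R * |f x| ^ q) := le_mul_of_one_le_left hRF hN'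
  unfold auxB
  calc _ ≤ |(∑ k ∈ S, x k * auxD f k x) * auxD f j x| + |x j * ((∑ k ∈ S, auxD f k x ^ 2) / 2)|
        + |x j * (|f x| ^ q / q)| + |c * (f x * auxD f j x)| :=
        (abs_add_le _ _).trans (by gcongr; exact (abs_add_le _ _).trans (by gcongr; exact abs_sub _ _))
    _ ≤ N * (2 * R * g) * g + 2 * R * (N * g ^ 2 / 2) + 2 * R * (|f x| ^ q / 2) + 1 * (|f x| * g) := by
        gcongr
    _ ≤ _ := by nlinarith

lemma aux_main (N : ℕ) (hN3 : 3 ≤ N) (hN5 : N ≤ 5)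
    (f : EuclideanSpace ℝ (Fin N) → ℝ) (hf : ContDiff ℝ 2 f) (S : Finset (Fin N))
    (hS : (S.card : ℝ) = (N : ℝ) - 1) (q : ℝ) (hqdef : q = 2 * (N : ℝ) / ((N : ℝ) - 2))
    (hgrad : Integrable (fun x => ‖fderiv ℝ f x‖ ^ 2))
    (hLp : Integrable (fun x => |f x| ^ q))
    (heq : ∀ x, (∑ j ∈ S, d2 f j x) + |f x| ^ (q - 2) * f x = 0) :
    ∀ x, f x = 0 := by
  have hN' : (3 : ℝ) ≤ N := by exact_mod_cast hN3
  have hN5' : (N : ℝ) ≤ 5 := by exact_mod_cast hN5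
  have hNm : (0 : ℝ) < (N : ℝ) - 2 := by linarith
  have hq2 : 2 < q := by
    rw [hqdef, lt_div_iff₀ hNm]; linarith
  obtain ⟨C, hC0, hC⟩ := aux_cutoff N
  set c : ℝ := ((N : ℝ) - 3) / 2 with hc
  set h : EuclideanSpace ℝ (Fin N) → ℝ := fun x => ‖fderiv ℝ f x‖ ^ 2 + |f x| ^ q with hh
  have hi : Integrable h := hgrad.add hLp
  have hh0 : ∀ x, 0 ≤ h x := fun x => by positivity
  set V : ℝ := volume.real (ball (0 : EuclideanSpace ℝ (Fin N)) 1) with hV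
  have hdiv : ∀ x, ∑ j ∈ S, fderiv ℝ (auxB f S q c j) x (EuclideanSpace.single j 1)
      = 1 / N * |f x| ^ q := by
    intro x
    rw [aux_div hf S hq2 c x (heq x), hS]
    have e1 : 1 - ((N : ℝ) - 1) / 2 + c = 0 := by rw [hc]; ring
    have e2 : ((N : ℝ) - 1) / q - c = 1 / N := by
      rw [hc, hqdef]; field_simp; ring
    rw [e1, e2]; ring
  -- the key estimate
  have key : ∀ ε : ℝ, 0 < ε → ∃ K : ℝ, ∀ n : ℕ, 1 ≤ n →
      ∫ x, |f x| ^ q ≤ K * (∫ x in {x | (n : ℝ) ≤ ‖x‖}, h x) + ε * (N * N * C * 2 ^ N * V) := by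
    intro ε hε
    obtain ⟨K, hK0, hK⟩ := aux_young N hN3 ε hε
    rw [← hqdef] at hK
    set K1 : ℝ := N * (C * (3 * N + 1 + K)) with hK1
    have hK10 : 0 ≤ K1 := by positivity
    refine ⟨N * K1 + 1, fun n hn => ?_⟩
    have hR : (0 : ℝ) < n := by exact_mod_cast hn
    generalize (n : ℝ) = R at hR ⊢
    obtain ⟨φ, φ1, φc, φ0, φle, φone, φd, φs⟩ := hC R hR
    have hms : MeasurableSet {x : EuclideanSpace ℝ (Fin N) | R ≤ ‖x‖} :=
      measurableSet_le measurable_const measurable_norm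
    have hB := fun j => aux_ibp φ (auxB f S q c j) φ1 φc
      (auxB_contDiff hf S (by linarith) c j) (EuclideanSpace.single j 1)
    have hI1 : ∫ x, φ x * (1 / N * |f x| ^ q)
        = ∫ x, - ∑ j ∈ S, fderiv ℝ φ x (EuclideanSpace.single j 1) * auxB f S q c j x := by
      calc ∫ x, φ x * (1 / N * |f x| ^ q)
          = ∫ x, ∑ j ∈ S, φ x * fderiv ℝ (auxB f S q c j) x (EuclideanSpace.single j 1) := by
            congr 1; ext x; rw [← hdiv x, Finset.mul_sum]
        _ = ∑ j ∈ S, ∫ x, φ x * fderiv ℝ (auxB f S q c j) x (EuclideanSpace.single j 1) :=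
            integral_finset_sum _ fun j _ => (hB j).1
        _ = ∑ j ∈ S, - ∫ x, fderiv ℝ φ x (EuclideanSpace.single j 1) * auxB f S q c j x :=
            Finset.sum_congr rfl fun j _ => (hB j).2.2
        _ = _ := by
            rw [Finset.sum_neg_distrib, integral_neg, integral_finset_sum _ fun j _ => (hB j).2.1]
    set G : EuclideanSpace ℝ (Fin N) → ℝ := fun x =>
      K1 * indicator {x | R ≤ ‖x‖} h x
        + indicator (closedBall 0 (2 * R)) (fun _ => N * C * ε * R⁻¹ ^ N) x with hG
    have hi1 : Integrable (fun x => K1 * indicator {x | R ≤ ‖x‖} h x) :=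
      (hi.indicator hms).const_mul K1
    have hi2 : Integrable (indicator (closedBall (0 : EuclideanSpace ℝ (Fin N)) (2 * R))
        (fun _ => N * C * ε * R⁻¹ ^ N)) := by
      rw [integrable_indicator_iff measurableSet_closedBall]
      exact integrableOn_const measure_closedBall_lt_top.ne
    have hpt : ∀ x, - ∑ j ∈ S, fderiv ℝ φ x (EuclideanSpace.single j 1) * auxB f S q c j x ≤ G x := by
      intro x
      have hG1 : 0 ≤ K1 * indicator {x | R ≤ ‖x‖} h x :=
        mul_nonneg hK10 (indicator_nonneg (fun y _ => hh0 y) x)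
      have hG2 : 0 ≤ indicator (closedBall (0 : EuclideanSpace ℝ (Fin N)) (2 * R))
        (fun _ => N * C * ε * R⁻¹ ^ N) x := indicator_nonneg (fun y _ => by positivity) x
      by_cases hz : fderiv ℝ φ x = 0
      · rw [hz]; simp only [ContinuousLinearMap.zero_apply, zero_mul, Finset.sum_const_zero, neg_zero]
        exact add_nonneg hG1 hG2
      · obtain ⟨hx1, hx2⟩ := φs x hz
        have hGx : G x = K1 * h x + N * C * ε * R⁻¹ ^ N := by
          simp only [hG]
          rw [indicator_of_mem (show x ∈ {x | R ≤ ‖x‖} from hx1),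
            indicator_of_mem (mem_closedBall_zero_iff.2 hx2)]
        have hterm : ∀ j ∈ S, |fderiv ℝ φ x (EuclideanSpace.single j 1) * auxB f S q c j x|
            ≤ C * (3 * N + 1 + K) * h x + C * ε * R⁻¹ ^ N := by
          intro j _
          have a1 : |fderiv ℝ φ x (EuclideanSpace.single j 1)| ≤ C / R :=
            (auxD_le φ j x).trans (φd x)
          have a2 := auxB_le (by omega) f S hq2 (c := c) (by rw [hc]; linarith)
            (by rw [hc]; linarith) j x hR hx2
          have a3 := hK R⁻¹ |f x| (by positivity) (abs_nonneg _)
          have a4 : R⁻¹ * (|f x| * ‖fderiv ℝ f x‖) ≤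
              R⁻¹ ^ 2 * |f x| ^ 2 + ‖fderiv ℝ f x‖ ^ 2 := by
            nlinarith [sq_nonneg (R⁻¹ * |f x| - ‖fderiv ℝ f x‖), sq_nonneg (R⁻¹ * |f x|),
              sq_nonneg (‖fderiv ℝ f x‖)]
          have a5 : R⁻¹ * (|f x| * ‖fderiv ℝ f x‖) ≤ (1 + K) * h x + ε * R⁻¹ ^ N := by
            have b1 : 0 ≤ |f x| ^ q := by positivity
            have b2 : 0 ≤ K * ‖fderiv ℝ f x‖ ^ 2 := by positivity
            simp only [hh]
            nlinarith
          rw [abs_mul]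
          calc _ ≤ C / R * (3 * N * R * h x + |f x| * ‖fderiv ℝ f x‖) :=
                mul_le_mul a1 a2 (abs_nonneg _) (by positivity)
            _ = C * (3 * N * h x + R⁻¹ * (|f x| * ‖fderiv ℝ f x‖)) := by field_simp
            _ ≤ C * (3 * N * h x + ((1 + K) * h x + ε * R⁻¹ ^ N)) := by gcongr
            _ = _ := by ring
        have hcard : (S.card : ℝ) ≤ N := by linarith
        have hT : 0 ≤ C * (3 * N + 1 + K) * h x + C * ε * R⁻¹ ^ N := by
          have := hh0 x
          positivity
        calc _ ≤ |∑ j ∈ S, fderiv ℝ φ x (EuclideanSpace.single j 1) * auxB f S q c j x| := neg_le_abs _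
          _ ≤ ∑ j ∈ S, |fderiv ℝ φ x (EuclideanSpace.single j 1) * auxB f S q c j x| :=
            Finset.abs_sum_le_sum_abs _ _
          _ ≤ ∑ j ∈ S, (C * (3 * N + 1 + K) * h x + C * ε * R⁻¹ ^ N) := Finset.sum_le_sum hterm
          _ = S.card * (C * (3 * N + 1 + K) * h x + C * ε * R⁻¹ ^ N) := by
            rw [Finset.sum_const, nsmul_eq_mul]
          _ ≤ N * (C * (3 * N + 1 + K) * h x + C * ε * R⁻¹ ^ N) := by gcongr
          _ = G x := by rw [hGx, hK1]; ring
    have hGint : ∫ x, G x = K1 * (∫ x in {x | R ≤ ‖x‖}, h x) + ε * (N * C * 2 ^ N * V) := by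
      rw [hG, integral_add hi1 hi2, integral_const_mul, integral_indicator hms,
        integral_indicator_const _ measurableSet_closedBall,
        Measure.addHaar_real_closedBall _ _ (by positivity), finrank_euclideanSpace_fin, ← hV,
        smul_eq_mul, mul_pow, inv_pow]
      field_simp
    have hle : ∫ x, φ x * (1 / N * |f x| ^ q) ≤ ∫ x, G x := by
      rw [hI1]
      refine integral_mono ?_ (hi1.add hi2) hpt
      exact (integrable_finset_sum _ fun j _ => (hB j).2.1).neg
    have hφF : Integrable (fun x => φ x * (1 / N * |f x| ^ q)) := by
      refine (φ1.continuous.mul (continuous_const.mul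
        (aux_pow_contDiff hf (by linarith)).continuous)).integrable_of_hasCompactSupport φc.mul_right
    have hFle : ∫ x, |f x| ^ q ≤ N * (∫ x, φ x * (1 / N * |f x| ^ q))
        + ∫ x in {x | R ≤ ‖x‖}, h x := by
      rw [← integral_const_mul, ← integral_indicator hms, ← integral_add (hφF.const_mul _)
        (hi.indicator hms)]
      refine integral_mono hLp ((hφF.const_mul _).add (hi.indicator hms)) fun x => ?_
      have e : (N : ℝ) * (φ x * (1 / N * |f x| ^ q)) = φ x * |f x| ^ q := by field_simp
      have b1 : 0 ≤ |f x| ^ q := by positivity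
      simp only [e]
      by_cases hx : R ≤ ‖x‖
      · rw [indicator_of_mem (show x ∈ {x | R ≤ ‖x‖} from hx)]
        have := mul_nonneg (φ0 x) b1
        have b2 : 0 ≤ ‖fderiv ℝ f x‖ ^ 2 := by positivity
        simp only [hh]; linarith
      · rw [indicator_of_notMem (show x ∉ {x | R ≤ ‖x‖} from hx), φone x (not_le.1 hx).le]
        simp
    calc _ ≤ _ := hFle
      _ ≤ N * (∫ x, G x) + ∫ x in {x | R ≤ ‖x‖}, h x := by gcongr
      _ = _ := by rw [hGint]; ring
  set M : ℝ := N * N * C * 2 ^ N * V with hM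
  have hM0 : 0 ≤ M := by positivity
  have key2 : ∀ ε : ℝ, 0 < ε → ∫ x, |f x| ^ q ≤ ε * M := by
    intro ε hε
    obtain ⟨K, hK⟩ := key ε hε
    have ht := ((aux_tail h hi).const_mul K).add_const (ε * M)
    rw [mul_zero, zero_add] at ht
    exact ge_of_tendsto ht (eventually_atTop.2 ⟨1, hK⟩)
  have hI0 : ∫ x, |f x| ^ q ≤ 0 := by
    have ht : Tendsto (fun ε : ℝ => ε * M) (nhdsWithin 0 (Ioi 0)) (nhds 0) := by
      have : Tendsto (fun ε : ℝ => ε * M) (nhds 0) (nhds (0 * M)) :=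
        (continuous_id.mul continuous_const).tendsto 0
      rw [zero_mul] at this
      exact this.mono_left nhdsWithin_le_nhds
    exact ge_of_tendsto ht (eventually_nhdsWithin_of_forall key2)
  have hI : ∫ x, |f x| ^ q = 0 := le_antisymm hI0 (integral_nonneg fun x => by positivity)
  rw [integral_eq_zero_iff_of_nonneg (fun x => by positivity) hLp] at hI
  have hcont : Continuous (fun x => |f x| ^ q) := (aux_pow_contDiff hf (by linarith)).continuous
  have hz := (hcont.ae_eq_iff_eq volume continuous_zero).1 hI
  intro x
  have hx : |f x| ^ q = 0 := congrFun hz x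
  rw [Real.rpow_eq_zero (abs_nonneg _) (by linarith)] at hx
  exact abs_eq_zero.1 hx

/-- Case `ℓ² = 1` of Lemma 2.5: a finite-energy solution of the degenerate elliptic
equation `Σ_{j≥2} ∂²ⱼf + |f|^{4/(N-2)}f = 0` vanishes identically. -/
theorem stmt7 (N : ℕ) (hN : N = 3 ∨ N = 4 ∨ N = 5)
    (f : EuclideanSpace ℝ (Fin N) → ℝ)
    (hf : ContDiff ℝ 2 f)
    (hgrad : Integrable (fun x => ‖gradient f x‖ ^ 2))
    (hLp : Integrable (fun x => |f x| ^ (2 * (N : ℝ) / ((N : ℝ) - 2))))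
    (heq : ∀ x, (∑ j ∈ Finset.univ.erase (⟨0, by omega⟩ : Fin N), d2 f j x)
        + |f x| ^ (4 / ((N : ℝ) - 2)) * f x = 0) :
    ∀ x, f x = 0 := by
  have hN3 : 3 ≤ N := by omega
  have hN5 : N ≤ 5 := by omega
  have hN' : (3 : ℝ) ≤ N := by exact_mod_cast hN3
  have hNm : (N : ℝ) - 2 ≠ 0 := by linarith
  have hqe : 2 * (N : ℝ) / ((N : ℝ) - 2) - 2 = 4 / ((N : ℝ) - 2) := by field_simp; ring
  refine aux_main N hN3 hN5 f hf (Finset.univ.erase (⟨0, by omega⟩ : Fin N)) ?_ _ rfl ?_ hLp ?_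
  · rw [Finset.card_erase_of_mem (Finset.mem_univ _), Finset.card_univ, Fintype.card_fin,
      Nat.cast_sub (by omega), Nat.cast_one]
  · simpa [gradient] using hgrad
  · intro x
    rw [hqe]
    exact heq x

end
end

section
/- Let N ∈ {3,4,5} and set n = N−1. Let F : ℝ^n → ℝ be twice continuously differentiable with ∇F ∈ L²(ℝ^n) and F ∈ L^{2N/(N−2)}(ℝ^n), satisfying pointwise ΔF + |F|^{4/(N−2)} F = 0 on ℝ^n. Then the Pohozaev-type identity (n−2)·∫_{ℝ^n}|∇F|² dx = (n(N−2)/N)·∫_{ℝ^n}|F|^{2N/(N−2)} dx holds. -/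
open MeasureTheory Metric Filter Set

noncomputable section

/-- Pohozaev vector field, `j`-th component. -/
def pohV {n : ℕ} (F : EuclideanSpace ℝ (Fin n) → ℝ) (p : ℝ) (j : Fin n)
    (x : EuclideanSpace ℝ (Fin n)) : ℝ :=
  (fderiv ℝ F x x) * fderiv ℝ F x (EuclideanSpace.single j 1)
    - x j * ((1 / 2) * (∑ i, (fderiv ℝ F x (EuclideanSpace.single i 1)) ^ 2) - p⁻¹ * ‖F x‖ ^ p)

lemma poh_sum_single {n : ℕ} (x : EuclideanSpace ℝ (Fin n)) :
    ∑ j, x j • (EuclideanSpace.single j (1 : ℝ) : EuclideanSpace ℝ (Fin n)) = x := by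
  simpa using (EuclideanSpace.basisFun (Fin n) ℝ).sum_repr x

lemma poh_clm_sum {n : ℕ} (L : EuclideanSpace ℝ (Fin n) →L[ℝ] ℝ) (x : EuclideanSpace ℝ (Fin n)) :
    ∑ j, x j * L (EuclideanSpace.single j (1 : ℝ)) = L x := by
  conv_rhs => rw [← poh_sum_single x]
  simp [map_sum]

lemma poh_grad_coord {n : ℕ} (F : EuclideanSpace ℝ (Fin n) → ℝ) (x : EuclideanSpace ℝ (Fin n))
    (j : Fin n) : gradient F x j = fderiv ℝ F x (EuclideanSpace.single j 1) := by
  rw [← inner_gradient_left]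
  exact (by simp [EuclideanSpace.inner_single_right, -inner_gradient_left] : gradient F x j = inner ℝ (gradient F x) (EuclideanSpace.single j (1 : ℝ)))

lemma poh_grad_sq {n : ℕ} (F : EuclideanSpace ℝ (Fin n) → ℝ) (x : EuclideanSpace ℝ (Fin n)) :
    ∑ i, (fderiv ℝ F x (EuclideanSpace.single i 1)) ^ 2 = ‖gradient F x‖ ^ 2 := by
  rw [EuclideanSpace.real_norm_sq_eq]
  simp [poh_grad_coord]

lemma poh_grad_norm {n : ℕ} (F : EuclideanSpace ℝ (Fin n) → ℝ) (x : EuclideanSpace ℝ (Fin n)) :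
    ‖fderiv ℝ F x‖ = ‖gradient F x‖ := by
  rw [← toDual_gradient, LinearIsometryEquiv.norm_map]

lemma pohV_contDiff {n : ℕ} {F : EuclideanSpace ℝ (Fin n) → ℝ} (hF : ContDiff ℝ 2 F) {p : ℝ}
    (hp : 2 < p) (j : Fin n) : ContDiff ℝ 1 (pohV F p j) := by
  have h1 : ContDiff ℝ 1 (fderiv ℝ F) := hF.fderiv_right (by norm_num)
  have h2 : ContDiff ℝ 1 (fun x => ‖F x‖ ^ p) := (hF.of_le (by norm_num)).norm_rpow (by linarith)
  have h3 : ContDiff ℝ 1 (fun x : EuclideanSpace ℝ (Fin n) => x j) := by fun_prop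
  unfold pohV
  fun_prop

lemma pohV_deriv {n : ℕ} {F : EuclideanSpace ℝ (Fin n) → ℝ} (hF : ContDiff ℝ 2 F) {p : ℝ}
    (hp : 2 < p) (j : Fin n) (x v : EuclideanSpace ℝ (Fin n)) :
    fderiv ℝ (pohV F p j) x v =
      (fderiv ℝ (fderiv ℝ F) x v x + fderiv ℝ F x v) * fderiv ℝ F x (EuclideanSpace.single j 1)
      + fderiv ℝ F x x * fderiv ℝ (fderiv ℝ F) x v (EuclideanSpace.single j 1)
      - v j * ((1 / 2) * (∑ i, (fderiv ℝ F x (EuclideanSpace.single i 1)) ^ 2) - p⁻¹ * ‖F x‖ ^ p)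
      - x j * ((∑ i, fderiv ℝ F x (EuclideanSpace.single i 1)
          * fderiv ℝ (fderiv ℝ F) x v (EuclideanSpace.single i 1))
          - ‖F x‖ ^ (p - 2) * F x * fderiv ℝ F x v) := by
  have h1 : HasFDerivAt (fderiv ℝ F) (fderiv ℝ (fderiv ℝ F) x) x :=
    ((hF.fderiv_right (m := 1) (by norm_num)).differentiable one_ne_zero x).hasFDerivAt
  have h0 : HasFDerivAt F (fderiv ℝ F x) x :=
    (hF.differentiable two_ne_zero x).hasFDerivAt
  have hX := h1.clm_apply (hasFDerivAt_id x)
  have hG : ∀ i : Fin n, HasFDerivAt (fun y => fderiv ℝ F y (EuclideanSpace.single i 1)) _ x :=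
    fun i => h1.clm_apply (hasFDerivAt_const (EuclideanSpace.single i (1 : ℝ)) x)
  have hP := (hasDerivAt_norm_rpow (F x) (p := p) (by linarith)).comp_hasFDerivAt x h0
  have hS := HasFDerivAt.fun_sum (u := Finset.univ) (fun i _ => (hG i).pow 2)
  have hx : HasFDerivAt (fun y : EuclideanSpace ℝ (Fin n) => y j)
      (EuclideanSpace.proj j : EuclideanSpace ℝ (Fin n) →L[ℝ] ℝ) x :=
    (EuclideanSpace.proj j : EuclideanSpace ℝ (Fin n) →L[ℝ] ℝ).hasFDerivAt
  have hV := (hX.mul (hG j)).sub (hx.mul ((hS.const_mul (1/2)).sub (hP.const_mul p⁻¹)))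
  have : fderiv ℝ (pohV F p j) x = _ := HasFDerivAt.fderiv hV
  rw [this]
  have hp0 : p ≠ 0 := by linarith
  simp [Finset.mul_sum]
  field_simp
  ring

lemma pohV_div {n : ℕ} {F : EuclideanSpace ℝ (Fin n) → ℝ} (hF : ContDiff ℝ 2 F) {p : ℝ}
    (hp : 2 < p) (heq : ∀ x, (∑ j, d2 F j x) + |F x| ^ (p - 2) * F x = 0)
    (x : EuclideanSpace ℝ (Fin n)) :
    ∑ j, fderiv ℝ (pohV F p j) x (EuclideanSpace.single j 1) =
      (1 - n / 2) * ‖gradient F x‖ ^ 2 + n * p⁻¹ * |F x| ^ p := by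
  have h1 : HasFDerivAt (fderiv ℝ F) (fderiv ℝ (fderiv ℝ F) x) x :=
    ((hF.fderiv_right (m := 1) (by norm_num)).differentiable one_ne_zero x).hasFDerivAt
  have hd2 : ∀ j, d2 F j x = fderiv ℝ (fderiv ℝ F) x (EuclideanSpace.single j 1)
      (EuclideanSpace.single j 1) := by
    intro j
    unfold d2
    rw [(h1.clm_apply (hasFDerivAt_const (EuclideanSpace.single j (1 : ℝ)) x)).fderiv]
    simp
  have hsym : ∀ v w, fderiv ℝ (fderiv ℝ F) x v w = fderiv ℝ (fderiv ℝ F) x w v := by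
    intro v w
    exact (hF.contDiffAt.isSymmSndFDerivAt (by simp)) v w
  have hq := heq x
  simp only [hd2] at hq
  simp only [pohV_deriv hF hp, poh_grad_sq, Finset.sum_sub_distrib, Finset.sum_add_distrib, add_mul,
    mul_sub, ← Finset.mul_sum]
  have a1 : ∑ j, x j * ∑ i, fderiv ℝ F x (EuclideanSpace.single i 1)
      * fderiv ℝ (fderiv ℝ F) x (EuclideanSpace.single j 1) (EuclideanSpace.single i 1)
      = ∑ i, fderiv ℝ (fderiv ℝ F) x (EuclideanSpace.single i 1) x
        * fderiv ℝ F x (EuclideanSpace.single i 1) := by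
    simp only [Finset.mul_sum]
    rw [Finset.sum_comm]
    refine Finset.sum_congr rfl fun i _ => ?_
    rw [← poh_clm_sum (fderiv ℝ (fderiv ℝ F) x (EuclideanSpace.single i 1)) x, Finset.sum_mul]
    refine Finset.sum_congr rfl fun j _ => ?_
    rw [hsym (EuclideanSpace.single j 1)]
    ring
  have a2 : ∑ j, x j * (‖F x‖ ^ (p - 2) * F x * fderiv ℝ F x (EuclideanSpace.single j 1))
      = ‖F x‖ ^ (p - 2) * F x * fderiv ℝ F x x := by
    rw [← poh_clm_sum (fderiv ℝ F x) x, Finset.mul_sum]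
    exact Finset.sum_congr rfl fun j _ => by ring
  have a3 := poh_grad_sq F x
  simp only [pow_two] at a3
  rw [a1, a2, a3]
  simp only [PiLp.single_apply, if_true, one_mul, Finset.sum_const, Finset.card_univ,
    Fintype.card_fin, nsmul_eq_mul, Real.norm_eq_abs]
  linear_combination (fderiv ℝ F x x) * hq

lemma poh_ibp {n : ℕ} {φ : EuclideanSpace ℝ (Fin n) → ℝ} (hφ : ContDiff ℝ 1 φ)
    (hc : HasCompactSupport φ) {V : Fin n → EuclideanSpace ℝ (Fin n) → ℝ}
    (hV : ∀ j, ContDiff ℝ 1 (V j)) :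
    ∫ x, φ x * ∑ j, fderiv ℝ (V j) x (EuclideanSpace.single j 1) =
      - ∫ x, ∑ j, fderiv ℝ φ x (EuclideanSpace.single j 1) * V j x := by
  have c1 : ∀ j, Continuous fun x => fderiv ℝ (V j) x (EuclideanSpace.single j 1) := fun j =>
    ((hV j).continuous_fderiv one_ne_zero).clm_apply continuous_const
  have c2 : ∀ j : Fin n, Continuous fun x => fderiv ℝ φ x (EuclideanSpace.single j 1) := fun j =>
    (hφ.continuous_fderiv one_ne_zero).clm_apply continuous_const
  have i1 : ∀ j, Integrable fun x => φ x * fderiv ℝ (V j) x (EuclideanSpace.single j 1) := fun j =>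
    (hφ.continuous.mul (c1 j)).integrable_of_hasCompactSupport hc.mul_right
  have i2 : ∀ j, Integrable fun x => fderiv ℝ φ x (EuclideanSpace.single j 1) * V j x := fun j =>
    ((c2 j).mul (hV j).continuous).integrable_of_hasCompactSupport
      (hc.fderiv_apply ℝ (EuclideanSpace.single j 1)).mul_right
  have i3 : ∀ j, Integrable fun x => φ x * V j x := fun j =>
    (hφ.continuous.mul (hV j).continuous).integrable_of_hasCompactSupport hc.mul_right
  simp only [Finset.mul_sum]
  rw [integral_finsetSum _ fun j _ => i1 j, integral_finsetSum _ fun j _ => i2 j,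
    ← Finset.sum_neg_distrib]
  refine Finset.sum_congr rfl fun j _ => ?_
  exact integral_mul_fderiv_eq_neg_fderiv_mul_of_integrable (i2 j) (i1 j) (i3 j)
    (fun x _ => hφ.differentiable one_ne_zero x) (fun x _ => (hV j).differentiable one_ne_zero x)

lemma pohV_bound {n : ℕ} (F : EuclideanSpace ℝ (Fin n) → ℝ) {p : ℝ} (hp : 2 < p)
    (L : EuclideanSpace ℝ (Fin n) →L[ℝ] ℝ) (x : EuclideanSpace ℝ (Fin n)) :
    ‖∑ j, L (EuclideanSpace.single j 1) * pohV F p j x‖ ≤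
      ‖L‖ * ‖x‖ * (2 * ‖gradient F x‖ ^ 2 + |F x| ^ p) := by
  have e : ∑ j, L (EuclideanSpace.single j 1) * pohV F p j x
      = fderiv ℝ F x x * L (gradient F x) - L x * ((1 / 2) * ‖gradient F x‖ ^ 2
        - p⁻¹ * |F x| ^ p) := by
    rw [← poh_clm_sum L x, ← poh_clm_sum L (gradient F x), Finset.mul_sum, Finset.sum_mul,
      ← Finset.sum_sub_distrib]
    refine Finset.sum_congr rfl fun j _ => ?_
    rw [poh_grad_coord, pohV, poh_grad_sq, Real.norm_eq_abs]
    ring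
  rw [e]
  have b1 : |fderiv ℝ F x x| ≤ ‖gradient F x‖ * ‖x‖ := by
    rw [← poh_grad_norm]; exact (fderiv ℝ F x).le_opNorm x
  have b2 : |L (gradient F x)| ≤ ‖L‖ * ‖gradient F x‖ := L.le_opNorm _
  have b3 : |L x| ≤ ‖L‖ * ‖x‖ := L.le_opNorm _
  have hP : 0 ≤ |F x| ^ p := by positivity
  have hp1 : p⁻¹ ≤ 1 := inv_le_one_of_one_le₀ (by linarith)
  have hp0 : 0 ≤ p⁻¹ := by positivity
  have b4 : |(1 / 2) * ‖gradient F x‖ ^ 2 - p⁻¹ * |F x| ^ p| ≤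
      ‖gradient F x‖ ^ 2 + |F x| ^ p := by
    rw [abs_le]
    constructor <;> nlinarith [sq_nonneg ‖gradient F x‖]
  calc ‖_‖ ≤ |fderiv ℝ F x x * L (gradient F x)| + |L x * ((1 / 2) * ‖gradient F x‖ ^ 2
        - p⁻¹ * |F x| ^ p)| := norm_sub_le _ _
    _ ≤ (‖gradient F x‖ * ‖x‖) * (‖L‖ * ‖gradient F x‖)
        + (‖L‖ * ‖x‖) * (‖gradient F x‖ ^ 2 + |F x| ^ p) := by
      rw [abs_mul, abs_mul]; gcongr
    _ = _ := by ring

lemma poh_cutoff (n : ℕ) : ∃ (φ : ℕ → EuclideanSpace ℝ (Fin n) → ℝ) (C : ℝ),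
    (∀ k, ContDiff ℝ 1 (φ k)) ∧ (∀ k, HasCompactSupport (φ k)) ∧ (∀ k x, ‖φ k x‖ ≤ 1) ∧
    (∀ x, Tendsto (fun k => φ k x) atTop (nhds 1)) ∧
    (∀ k x, ‖fderiv ℝ (φ k) x‖ * ‖x‖ ≤ C) ∧
    (∀ x, Tendsto (fun k => ‖fderiv ℝ (φ k) x‖) atTop (nhds 0)) := by
  obtain ⟨χ, hχ, hχc, hχ1, hχ0⟩ : ∃ χ : EuclideanSpace ℝ (Fin n) → ℝ, ContDiff ℝ 1 χ ∧
      HasCompactSupport χ ∧ (∀ x, ‖χ x‖ ≤ 1) ∧ χ 0 = 1 := by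
    obtain ⟨χ⟩ : Nonempty (ContDiffBump (0 : EuclideanSpace ℝ (Fin n))) := inferInstance
    refine ⟨χ, χ.contDiff, χ.hasCompactSupport, fun x => ?_, χ.one_of_mem_closedBall 
      (mem_closedBall_self χ.rIn_pos.le)⟩
    rw [Real.norm_of_nonneg χ.nonneg]
    exact χ.le_one
  have hdc := hχ.continuous_fderiv one_ne_zero
  obtain ⟨C1, hC1⟩ := (hχc.fderiv (𝕜 := ℝ)).exists_bound_of_continuous hdc
  obtain ⟨C2, hC2⟩ := HasCompactSupport.exists_bound_of_continuous
    (f := fun y => ‖y‖ * ‖fderiv ℝ χ y‖) ((hχc.fderiv (𝕜 := ℝ)).norm.mul_left)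
    (continuous_norm.mul hdc.norm)
  obtain ⟨r, hr, hr0⟩ : ∃ r : ℕ → ℝ, (∀ k, 0 < r k) ∧ Tendsto r atTop (nhds 0) :=
    ⟨fun k => 1 / ((k : ℝ) + 1), fun k => by positivity, tendsto_one_div_add_atTop_nhds_zero_nat⟩
  have hφd : ∀ k x, fderiv ℝ (fun x => χ (r k • x)) x = r k • fderiv ℝ χ (r k • x) := fun k x => by
    simpa using fderiv_comp_smul (𝕜 := ℝ) (f := χ) (r k) (x := x)
  refine ⟨fun k x => χ (r k • x), C2, fun k => hχ.comp (by fun_prop),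
    fun k => hχc.comp_smul (hr k).ne', fun k x => hχ1 _, fun x => ?_, fun k x => ?_, fun x => ?_⟩
  · have h0 : Tendsto (fun k => r k • x) atTop (nhds 0) := by
      simpa using hr0.smul_const x
    have h1 := (hχ.continuous.tendsto 0).comp h0
    rw [hχ0] at h1
    exact h1
  · have := hC2 (r k • x)
    rw [norm_mul, norm_norm, norm_norm, norm_smul, Real.norm_of_nonneg (hr k).le] at this
    rw [hφd, norm_smul, Real.norm_of_nonneg (hr k).le]
    linarith
  · have hz : Tendsto (fun k => r k * C1) atTop (nhds 0) := by simpa using hr0.mul_const C1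
    refine squeeze_zero (fun k => norm_nonneg _) (fun k => ?_) hz
    rw [hφd, norm_smul, Real.norm_of_nonneg (hr k).le]
    exact mul_le_mul_of_nonneg_left (hC1 _) (hr k).le

lemma poh_main {n : ℕ} {F : EuclideanSpace ℝ (Fin n) → ℝ} (hF : ContDiff ℝ 2 F) {p : ℝ}
    (hp : 2 < p) (heq : ∀ x, (∑ j, d2 F j x) + |F x| ^ (p - 2) * F x = 0)
    (hgrad : Integrable (fun x => ‖gradient F x‖ ^ 2))
    (hLp : Integrable (fun x => |F x| ^ p)) :
    (1 - n / 2) * (∫ x, ‖gradient F x‖ ^ 2) + n * p⁻¹ * (∫ x, |F x| ^ p) = 0 := by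
  obtain ⟨φ, C, hφ, hφc, hφ1, hφt, hφC, hφz⟩ := poh_cutoff n
  obtain ⟨D, hDdef⟩ : ∃ D : EuclideanSpace ℝ (Fin n) → ℝ, D = fun x =>
    (1 - n / 2) * ‖gradient F x‖ ^ 2 + n * p⁻¹ * |F x| ^ p := ⟨_, rfl⟩
  have hD : Integrable D := by
    rw [hDdef]
    exact (hgrad.const_mul _).add (hLp.const_mul _)
  have hibp : ∀ k, ∫ x, φ k x * D x =
      - ∫ x, ∑ j, fderiv ℝ (φ k) x (EuclideanSpace.single j 1) * pohV F p j x := fun k => by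
    rw [← poh_ibp (hφ k) (hφc k) (fun j => pohV_contDiff hF hp j)]
    simp only [pohV_div hF hp heq, hDdef]
  have t1 : Tendsto (fun k => ∫ x, φ k x * D x) atTop (nhds (∫ x, D x)) := by
    refine tendsto_integral_of_dominated_convergence (fun x => ‖D x‖) (fun k =>
      (hφ k).continuous.aestronglyMeasurable.mul hD.aestronglyMeasurable) hD.norm ?_ ?_
    · refine fun k => Eventually.of_forall fun x => ?_
      rw [norm_mul]
      exact mul_le_of_le_one_left (norm_nonneg _) (hφ1 k x)
    · refine Eventually.of_forall fun x => ?_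
      simpa using (hφt x).mul_const (D x)
  have t2 : Tendsto (fun k => ∫ x, ∑ j, fderiv ℝ (φ k) x (EuclideanSpace.single j 1) * pohV F p j x)
      atTop (nhds (∫ _ : EuclideanSpace ℝ (Fin n), (0 : ℝ))) := by
    refine tendsto_integral_of_dominated_convergence
      (fun x => C * (2 * ‖gradient F x‖ ^ 2 + |F x| ^ p)) (fun k => ?_)
      (((hgrad.const_mul 2).add hLp).const_mul C) ?_ ?_
    · refine (continuous_finsetSum _ fun j _ => ?_).aestronglyMeasurable
      exact (((hφ k).continuous_fderiv one_ne_zero).clm_apply continuous_const).mul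
        (pohV_contDiff hF hp j).continuous
    · refine fun k => Eventually.of_forall fun x => (pohV_bound F hp _ x).trans ?_
      exact mul_le_mul_of_nonneg_right (hφC k x) (by positivity)
    · refine Eventually.of_forall fun x => ?_
      have hz : Tendsto (fun k => ‖fderiv ℝ (φ k) x‖ * ‖x‖ *
          (2 * ‖gradient F x‖ ^ 2 + |F x| ^ p)) atTop (nhds 0) := by
        simpa using ((hφz x).mul_const ‖x‖).mul_const (2 * ‖gradient F x‖ ^ 2 + |F x| ^ p)
      exact squeeze_zero_norm (fun k => pohV_bound F hp _ x) hz
  have t3 := tendsto_nhds_unique (t1.congr hibp) t2.neg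
  rw [integral_zero, neg_zero, hDdef, integral_add (hgrad.const_mul _) (hLp.const_mul _),
    integral_const_mul, integral_const_mul] at t3
  exact t3

/-- Pohozaev-type identity in dimension `n = N - 1` for the supercritical equation
`ΔF + |F|^{4/(N-2)}F = 0`:  `(n-2)∫|∇F|² = (n(N-2)/N)∫|F|^{2N/(N-2)}`. -/
theorem stmt8 (N : ℕ) (hN : N = 3 ∨ N = 4 ∨ N = 5)
    (F : EuclideanSpace ℝ (Fin (N - 1)) → ℝ)
    (hF : ContDiff ℝ 2 F)
    (hgrad : Integrable (fun x => ‖gradient F x‖ ^ 2))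
    (hLp : Integrable (fun x => |F x| ^ (2 * (N : ℝ) / ((N : ℝ) - 2))))
    (heq : ∀ x, (∑ j, d2 F j x) + |F x| ^ (4 / ((N : ℝ) - 2)) * F x = 0) :
    (((N : ℝ) - 1) - 2) * (∫ x, ‖gradient F x‖ ^ 2)
      = (((N : ℝ) - 1) * ((N : ℝ) - 2) / (N : ℝ))
          * (∫ x, |F x| ^ (2 * (N : ℝ) / ((N : ℝ) - 2))) := by
  have hN3 : (3 : ℝ) ≤ N := by rcases hN with h | h | h <;> subst h <;> norm_num
  have hN2 : (0 : ℝ) < (N : ℝ) - 2 := by linarith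
  have hp : 2 < 2 * (N : ℝ) / ((N : ℝ) - 2) := by
    rw [lt_div_iff₀ hN2]; linarith
  have hp2 : 2 * (N : ℝ) / ((N : ℝ) - 2) - 2 = 4 / ((N : ℝ) - 2) := by
    field_simp; ring
  have hn : ((N - 1 : ℕ) : ℝ) = (N : ℝ) - 1 := by
    rcases hN with h | h | h <;> subst h <;> norm_num
  have := poh_main hF hp (by rw [hp2]; exact heq) hgrad hLp
  rw [hn, inv_div] at this
  have e : ((N : ℝ) - 1) * (((N : ℝ) - 2) / (2 * N))
      = (((N : ℝ) - 1) * ((N : ℝ) - 2) / (N : ℝ)) / 2 := by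
    field_simp
  rw [e] at this
  linear_combination (-2) * this

end
end

section
/- Let N ∈ {3,4,5} and let ℓ ∈ ℝ with ℓ² > 1. Let f : ℝ^N → ℝ be twice continuously differentiable with ∇f ∈ L²(ℝ^N) and f ∈ L^{2N/(N−2)}(ℝ^N), satisfying pointwise (1−ℓ²)∂²_{x₁}f + Σ_{j=2}^N ∂²_{x_j}f + |f|^{4/(N−2)} f = 0 on ℝ^N. Then f is identically zero. -/
open MeasureTheory Metric Filter Set

noncomputable section

open Topology in
lemma aux_flux {N : ℕ} (T : Fin N → EuclideanSpace ℝ (Fin N) → ℝ)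
    (hT : ∀ k, ContDiff ℝ 1 (T k)) (hI : ∀ k, Integrable (T k))
    (hdiv : ∀ x, ∑ k, fderiv ℝ (T k) x (EuclideanSpace.single k 1) = 0) (j : Fin N) :
    ∫ x, T j x = 0 := by
  let χ : ContDiffBump (0 : EuclideanSpace ℝ (Fin N)) := ⟨1, 2, one_pos, one_lt_two⟩
  let ψ : EuclideanSpace ℝ (Fin N) → ℝ := fun y => y j * χ y
  have hψ : ContDiff ℝ 1 ψ := by
    have h1 : ContDiff ℝ 1 (fun y : EuclideanSpace ℝ (Fin N) => y j) :=
      (EuclideanSpace.proj (𝕜 := ℝ) j).contDiff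
    exact h1.mul χ.contDiff
  have hψc : HasCompactSupport ψ := χ.hasCompactSupport.mul_left
  have hψd : Continuous (fderiv ℝ ψ) := hψ.continuous_fderiv one_ne_zero
  have hψ0 : ∀ k, fderiv ℝ ψ 0 (EuclideanSpace.single k 1) = if k = j then 1 else 0 := by
    intro k
    have : ψ =ᶠ[𝓝 0] fun y => EuclideanSpace.proj (𝕜 := ℝ) j y := by
      filter_upwards [χ.eventuallyEq_one] with y hy
      simp [ψ, hy]
    rw [this.fderiv_eq, ContinuousLinearMap.fderiv]
    simp [eq_comm]
  obtain ⟨C, hC⟩ := (hψc.fderiv (𝕜 := ℝ)).exists_bound_of_continuous hψd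
  -- scaled identity
  have key : ∀ n : ℕ, ∑ k, ∫ x, T k x *
      fderiv ℝ ψ (((n : ℝ) + 1)⁻¹ • x) (EuclideanSpace.single k 1) = 0 := by
    intro n
    set c : ℝ := ((n : ℝ) + 1)⁻¹ with hc
    have hc0 : c ≠ 0 := by positivity
    let φ : EuclideanSpace ℝ (Fin N) → ℝ := fun x => ψ (c • x)
    have hφ : ContDiff ℝ 1 φ := hψ.comp (contDiff_const_smul c)
    have hφc : HasCompactSupport φ := hψc.comp_smul hc0
    have hφd : ∀ x v, fderiv ℝ φ x v = c * fderiv ℝ ψ (c • x) v := by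
      intro x v
      have h1 : HasFDerivAt φ _ x := HasFDerivAt.comp x
        ((hψ.differentiable one_ne_zero) (c • x)).hasFDerivAt
        ((hasFDerivAt_id x).const_smul c)
      rw [h1.fderiv]
      simp
    have i1 : ∀ k, Integrable (fun x => fderiv ℝ (T k) x (EuclideanSpace.single k 1) * φ x) := by
      intro k
      refine Continuous.integrable_of_hasCompactSupport ?_ hφc.mul_left
      exact (((hT k).continuous_fderiv one_ne_zero).clm_apply continuous_const).mul hφ.continuous
    have ibp : ∀ k, ∫ x, T k x * fderiv ℝ φ x (EuclideanSpace.single k 1)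
        = - ∫ x, fderiv ℝ (T k) x (EuclideanSpace.single k 1) * φ x := by
      intro k
      refine integral_mul_fderiv_eq_neg_fderiv_mul_of_integrable (i1 k) ?_ ?_ ?_ ?_
      · refine Continuous.integrable_of_hasCompactSupport ?_ ?_
        · exact (hT k).continuous.mul
            ((hφ.continuous_fderiv one_ne_zero).clm_apply continuous_const)
        · exact (hφc.fderiv_apply (𝕜 := ℝ) _).mul_left
      · exact Continuous.integrable_of_hasCompactSupport ((hT k).continuous.mul hφ.continuous)
          hφc.mul_left
      · exact fun x _ => (hT k).differentiable one_ne_zero x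
      · exact fun x _ => hφ.differentiable one_ne_zero x
    have h2 : ∑ k, ∫ x, T k x * fderiv ℝ φ x (EuclideanSpace.single k 1) = 0 := by
      simp_rw [ibp]
      rw [Finset.sum_neg_distrib, ← integral_finsetSum _ (fun k _ => i1 k)]
      simp_rw [← Finset.sum_mul, hdiv]
      simp
    have h3 : ∀ k x, T k x * fderiv ℝ φ x (EuclideanSpace.single k 1)
        = c * (T k x * fderiv ℝ ψ (c • x) (EuclideanSpace.single k 1)) := by
      intro k x
      rw [hφd]; ring
    simp_rw [h3, integral_const_mul, ← Finset.mul_sum] at h2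
    exact (mul_eq_zero.mp h2).resolve_left hc0
  have lim : ∀ k, Tendsto (fun n : ℕ => ∫ x, T k x *
      fderiv ℝ ψ (((n : ℝ) + 1)⁻¹ • x) (EuclideanSpace.single k 1)) atTop
      (𝓝 (∫ x, T k x * if k = j then 1 else 0)) := by
    intro k
    refine tendsto_integral_of_dominated_convergence (fun x => ‖T k x‖ * C) ?_ ?_ ?_ ?_
    · intro n
      refine Continuous.aestronglyMeasurable ?_
      exact (hT k).continuous.mul
        ((hψd.comp (continuous_const_smul _)).clm_apply continuous_const)
    · exact (hI k).norm.mul_const C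
    · intro n
      refine Eventually.of_forall fun x => ?_
      rw [norm_mul]
      gcongr
      refine (ContinuousLinearMap.le_opNorm _ _).trans ?_
      simpa using hC (((n : ℝ) + 1)⁻¹ • x)
    · refine Eventually.of_forall fun x => ?_
      rw [← hψ0 k]
      refine Tendsto.const_mul _ ?_
      have h1 : Tendsto (fun n : ℕ => ((n : ℝ) + 1)⁻¹ • x) atTop (𝓝 0) := by
        have := (tendsto_one_div_add_atTop_nhds_zero_nat (𝕜 := ℝ)).smul_const x
        simpa using this
      have h2 : Continuous fun y => fderiv ℝ ψ y (EuclideanSpace.single k 1) :=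
        hψd.clm_apply continuous_const
      exact (h2.tendsto 0).comp h1
  have h := tendsto_finsetSum Finset.univ (fun k _ => lim k)
  simp_rw [key] at h
  have h' := tendsto_nhds_unique h tendsto_const_nhds
  rw [Finset.sum_eq_single j] at h'
  · simpa using h'
  · intro b _ hb; simp [hb]
  · simp

lemma aux_pohozaev {N : ℕ} (a : Fin N → ℝ) (q : ℝ) (hq : 1 < q)
    (f : EuclideanSpace ℝ (Fin N) → ℝ) (hf : ContDiff ℝ 2 f)
    (hI : ∀ k, Integrable (fun x => (fderiv ℝ f x (EuclideanSpace.single k 1)) ^ 2))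
    (hq' : Integrable (fun x => |f x| ^ q))
    (heq : ∀ x, ∑ k, a k * d2 f k x + |f x| ^ (q - 2) * f x = 0) (j : Fin N) :
    a j * ∫ x, (fderiv ℝ f x (EuclideanSpace.single j 1)) ^ 2
      = ∫ x, ((1 / 2) * ∑ i, a i * (fderiv ℝ f x (EuclideanSpace.single i 1)) ^ 2
          - q⁻¹ * |f x| ^ q) := by
  set g : Fin N → EuclideanSpace ℝ (Fin N) → ℝ :=
    fun k x => fderiv ℝ f x (EuclideanSpace.single k 1) with hg
  have hgd : ∀ k, ContDiff ℝ 1 (g k) := fun k =>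
    (hf.fderiv_right (m := 1) (by norm_num)).clm_apply contDiff_const
  have hfd : Differentiable ℝ f := hf.differentiable two_ne_zero
  have hg1 : ∀ k x, HasFDerivAt (g k) (fderiv ℝ (g k) x) x := fun k x =>
    ((hgd k).differentiable one_ne_zero x).hasFDerivAt
  have hsymm : ∀ i k x, fderiv ℝ (g i) x (EuclideanSpace.single k 1)
      = fderiv ℝ (g k) x (EuclideanSpace.single i 1) := by
    intro i k x
    have hs : IsSymmSndFDerivAt ℝ f x := hf.contDiffAt.isSymmSndFDerivAt (by simp)
    have hd : DifferentiableAt ℝ (fderiv ℝ f) x :=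
      (hf.fderiv_right (m := 1) (by norm_num)).differentiable one_ne_zero x
    have h : ∀ i v, fderiv ℝ (g i) x v
        = fderiv ℝ (fderiv ℝ f) x v (EuclideanSpace.single i 1) := by
      intro i v
      have := (hd.hasFDerivAt.clm_apply
        (hasFDerivAt_const (EuclideanSpace.single i (1 : ℝ)) x)).fderiv
      simp only [hg]
      rw [this]; simp
    rw [h, h]
    exact hs.eq _ _
  let L : EuclideanSpace ℝ (Fin N) → ℝ := fun x =>
    (1 / 2) * ∑ i, a i * (g i x) ^ 2 - q⁻¹ * |f x| ^ q
  have hLc : ContDiff ℝ 1 L := by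
    have h1 : ContDiff ℝ 1 (fun x => |f x| ^ q) := by
      simpa using (hf.of_le one_le_two).norm_rpow hq
    exact (contDiff_const.mul (ContDiff.sum fun i _ => contDiff_const.mul ((hgd i).pow 2))).sub
      (contDiff_const.mul h1)
  have hLI : Integrable L :=
    ((integrable_finsetSum _ fun i _ => (hI i).const_mul (a i)).const_mul _).sub
      (hq'.const_mul _)
  have hLd : ∀ x, fderiv ℝ L x (EuclideanSpace.single j 1)
      = ∑ i, a i * (g i x * fderiv ℝ (g j) x (EuclideanSpace.single i 1))
        - |f x| ^ (q - 2) * f x * g j x := by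
    intro x
    have h1 : HasFDerivAt (fun x => |f x| ^ q) _ x :=
      (hasDerivAt_abs_rpow (f x) hq).comp_hasFDerivAt x (hfd x).hasFDerivAt
    have h2 : HasFDerivAt (fun x => ∑ i, a i * (g i x) ^ 2) _ x :=
      HasFDerivAt.fun_sum fun i _ => ((hg1 i x).pow 2).const_mul (a i)
    have h3 : HasFDerivAt L _ x := (h2.const_mul (1 / 2)).sub (h1.const_mul q⁻¹)
    rw [h3.fderiv]
    have hq0 : q ≠ 0 := by linarith
    simp [Finset.mul_sum]
    congr 1
    · refine Finset.sum_congr rfl fun i _ => ?_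
      rw [hsymm i j]; ring
    · simp only [hg]; field_simp
  let T : Fin N → EuclideanSpace ℝ (Fin N) → ℝ := fun k x =>
    a k * (g k x * g j x) - (if k = j then 1 else 0) * L x
  have hgI : ∀ k, Integrable (fun x => g k x * g j x) := by
    intro k
    refine Integrable.mono' ((hI k).add (hI j))
      ((hgd k).continuous.mul (hgd j).continuous).aestronglyMeasurable ?_
    refine Eventually.of_forall fun x => ?_
    simp only [Pi.add_apply, Real.norm_eq_abs]
    rw [abs_le]
    constructor <;> nlinarith [sq_nonneg (g k x + g j x), sq_nonneg (g k x - g j x),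
      sq_nonneg (g k x), sq_nonneg (g j x)]
  have main := aux_flux T
    (fun k => (contDiff_const.mul ((hgd k).mul (hgd j))).sub (contDiff_const.mul hLc))
    (fun k => ((hgI k).const_mul _).sub (hLI.const_mul _)) ?_ j
  · simp only [T, if_true, one_mul] at main
    rw [integral_sub ((hgI j).const_mul _) hLI, integral_const_mul] at main
    simp only [← pow_two] at main
    linarith
  · intro x
    have hTd : ∀ k, fderiv ℝ (T k) x (EuclideanSpace.single k 1)
        = a k * (g k x * fderiv ℝ (g j) x (EuclideanSpace.single k 1))
          + a k * d2 f k x * g j x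
          - (if k = j then fderiv ℝ L x (EuclideanSpace.single k 1) else 0) := by
      intro k
      have h3 : HasFDerivAt (T k) _ x :=
        (((hg1 k x).mul (hg1 j x)).const_mul (a k)).sub
          ((hLc.differentiable one_ne_zero x).hasFDerivAt.const_mul (if k = j then (1 : ℝ) else 0))
      rw [h3.fderiv]
      have : d2 f k x = fderiv ℝ (g k) x (EuclideanSpace.single k 1) := rfl
      rw [this]
      split_ifs <;> simp <;> ring
    simp_rw [hTd]
    rw [Finset.sum_sub_distrib, Finset.sum_add_distrib, Finset.sum_ite_eq' Finset.univ j,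
      if_pos (Finset.mem_univ _), hLd, ← Finset.sum_mul]
    linear_combination (g j x) * heq x

/-- Case `ℓ² > 1` of Lemma 2.5: no nonzero finite-energy traveling-wave profile with
speed greater than one. -/
theorem stmt9 (N : ℕ) (hN : N = 3 ∨ N = 4 ∨ N = 5)
    (ℓ : ℝ) (hℓ : 1 < ℓ ^ 2)
    (f : EuclideanSpace ℝ (Fin N) → ℝ)
    (hf : ContDiff ℝ 2 f)
    (hgrad : Integrable (fun x => ‖gradient f x‖ ^ 2))
    (hLp : Integrable (fun x => |f x| ^ (2 * (N : ℝ) / ((N : ℝ) - 2))))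
    (heq : ∀ x, (1 - ℓ ^ 2) * d2 f ⟨0, by omega⟩ x
        + (∑ j ∈ Finset.univ.erase (⟨0, by omega⟩ : Fin N), d2 f j x)
        + |f x| ^ (4 / ((N : ℝ) - 2)) * f x = 0) :
    ∀ x, f x = 0 := by
  have hN3 : 3 ≤ N := by omega
  have hN0 : (3 : ℝ) ≤ N := by exact_mod_cast hN3
  set z : Fin N := ⟨0, by omega⟩ with hz
  have hq : 1 < 2 * (N : ℝ) / ((N : ℝ) - 2) := by
    rw [lt_div_iff₀ (by linarith)]; linarith
  have hfc : Continuous (fderiv ℝ f) := hf.continuous_fderiv two_ne_zero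
  have hgc : ∀ k : Fin N, Continuous fun x => fderiv ℝ f x (EuclideanSpace.single k 1) :=
    fun k => hfc.clm_apply continuous_const
  have hI : ∀ k, Integrable (fun x => (fderiv ℝ f x (EuclideanSpace.single k 1)) ^ 2) := by
    intro k
    refine hgrad.mono' ((hgc k).pow 2).aestronglyMeasurable (Eventually.of_forall fun x => ?_)
    have h1 : ‖gradient f x‖ = ‖fderiv ℝ f x‖ := by simp [gradient]
    rw [norm_pow, h1]
    gcongr
    simpa using (fderiv ℝ f x).le_opNorm (EuclideanSpace.single k 1)
  have P := aux_pohozaev (fun k => if k = z then 1 - ℓ ^ 2 else 1) _ hq f hf hI hLp (by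
    intro x
    rw [← heq x, ← Finset.add_sum_erase _ _ (Finset.mem_univ z)]
    have e1 : 2 * (N : ℝ) / ((N : ℝ) - 2) - 2 = 4 / ((N : ℝ) - 2) := by
      have : (N : ℝ) - 2 ≠ 0 := by linarith
      field_simp; ring
    have e2 : ∑ k ∈ Finset.univ.erase z, (if k = z then 1 - ℓ ^ 2 else 1) * d2 f k x
        = ∑ k ∈ Finset.univ.erase z, d2 f k x := by
      refine Finset.sum_congr rfl fun k hk => ?_
      rw [if_neg (Finset.ne_of_mem_erase hk), one_mul]
    rw [e1, e2, if_pos rfl])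
  have nn : ∀ k : Fin N, 0 ≤ ∫ x, (fderiv ℝ f x (EuclideanSpace.single k 1)) ^ 2 :=
    fun k => integral_nonneg fun x => sq_nonneg _
  have P0 := P z
  have P1 := P ⟨1, by omega⟩
  simp only [if_true] at P0
  rw [if_neg (by simp [hz])] at P1
  have hint : ∀ k : Fin N, ∫ x, (fderiv ℝ f x (EuclideanSpace.single k 1)) ^ 2 = 0 := by
    intro k
    by_cases hk : k = z
    · subst hk
      nlinarith [nn z, nn ⟨1, by omega⟩]
    · have Pk := P k
      rw [if_neg hk] at Pk
      nlinarith [nn z, nn k]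
  have hpt : ∀ (k : Fin N) x, fderiv ℝ f x (EuclideanSpace.single k 1) = 0 := by
    intro k x
    have h1 := (integral_eq_zero_iff_of_nonneg (fun x => sq_nonneg _) (hI k)).mp (hint k)
    have h2 := Continuous.ae_eq_iff_eq volume ((hgc k).pow 2) continuous_zero |>.mp h1
    exact pow_eq_zero_iff two_ne_zero |>.mp (congrFun h2 x)
  have hfd : ∀ x, fderiv ℝ f x = 0 := by
    intro x
    have h : ((fderiv ℝ f x : EuclideanSpace ℝ (Fin N) →L[ℝ] ℝ) :
        EuclideanSpace ℝ (Fin N) →ₗ[ℝ] ℝ) = 0 := by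
      refine (EuclideanSpace.basisFun (Fin N) ℝ).toBasis.ext fun k => ?_
      simpa using hpt k x
    ext v
    exact LinearMap.congr_fun h v
  have hconst : ∀ x y, f x = f y :=
    is_const_of_fderiv_eq_zero (hf.differentiable two_ne_zero) hfd
  intro x
  have hc : (fun y => |f y| ^ (2 * (N : ℝ) / ((N : ℝ) - 2)))
      = fun _ => |f x| ^ (2 * (N : ℝ) / ((N : ℝ) - 2)) := by
    funext y; rw [hconst y x]
  rw [hc, integrable_const_iff] at hLp
  haveI : Nonempty (Fin N) := ⟨z⟩
  rcases hLp with h | h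
  · have := (Real.rpow_eq_zero (abs_nonneg (f x)) (by linarith)).mp h
    exact abs_eq_zero.mp this
  · exfalso
    have h' := h.measure_univ_lt_top
    rw [measure_univ_of_isAddLeftInvariant] at h'
    exact lt_irrefl _ h'

end
end
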